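/- arXiv:1906.03315 — 2 statements merged into one kernel-verified Lean document; each statement's English description precedes it below -/
import Mathlib

section
/- Let k, r be nonnegative integers with k + r = n and let a = (k−1, k−1, …, k−1) be the constant sequence of length r. Then dim_ℚ V_n(a) ≥ k! · Stir(n,k), where Stir(n,k) is the Stirling number of the second kind counting k-block set partitions of {1,…,n}. In fact the set { ∂_1^{c_1} ⋯ ∂_n^{c_n} Δ_n(a) : (c_1,…,c_n) is (n,k)-substaircase } is linearly independent in V_n(a). -/
open MvPolynomial

/-- Superspace of rank `n`: elements are represented by their coefficients on the
basis of `θ`-monomials `θ_S` (for `S` a subset of `Fin n`, with factors in increasing order),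
with coefficients in the polynomial ring `ℚ[x_1, …, x_n]`. -/
abbrev Superspace (n : ℕ) := Finset (Fin n) → MvPolynomial (Fin n) ℚ

/-- The partial derivative `∂_i` with respect to the commuting variable `x_i`,
treating the `θ`-variables as constants. -/
noncomputable def xDeriv {n : ℕ} (i : Fin n) (F : Superspace n) : Superspace n :=
  fun S => MvPolynomial.pderiv i (F S)

/-- The partial derivative `∂_i^θ` with respect to the anticommuting variable `θ_i`:
it is `ℚ[x]`-linear and sends `θ_{j_1} ⋯ θ_{j_r}` (with `j_1 < ⋯ < j_r`) to
`(-1)^{s-1} θ_{j_1} ⋯ ω(θ_{j_s}) ⋯ θ_{j_r}` if `j_s = i`, and to `0` if `i` does not occur. -/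
noncomputable def thetaDeriv {n : ℕ} (i : Fin n) (F : Superspace n) : Superspace n :=
  fun S => if i ∈ S then 0
    else ((-1 : ℚ) ^ (S.filter (fun j => j < i)).card) • F (insert i S)

/-- The differential operator `∂(p)` (replace each `x_i` in `p` by `∂_i`) applied to `q`. -/
noncomputable def diffOp {n : ℕ} (p q : MvPolynomial (Fin n) ℚ) : MvPolynomial (Fin n) ℚ :=
  ∑ a ∈ p.support, ∑ b ∈ q.support,
    (p.coeff a * q.coeff b * ∏ i : Fin n, ((b i).descFactorial (a i) : ℚ)) •
      MvPolynomial.monomial (b - a) (1 : ℚ)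

/-- The action of the polynomial ring `ℚ[x_1, …, x_n]` on superspace, `f · g := ∂(f)(g)`. -/
noncomputable def pAct {n : ℕ} (p : MvPolynomial (Fin n) ℚ) (F : Superspace n) : Superspace n :=
  fun S => diffOp p (F S)

/-- Iterated `θ`-derivative along a list (leftmost applied last). -/
noncomputable def thetaDerivList {n : ℕ} (l : List (Fin n)) (F : Superspace n) : Superspace n :=
  l.foldr thetaDeriv F

/-- The action of superspace on itself, `f · g := ∂(f)(g)`, where `∂(f)` is obtained
from `f` by replacing every `x_i` by `∂_i` and every `θ_i` by `∂_i^θ`. -/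
noncomputable def superAct {n : ℕ} (f g : Superspace n) : Superspace n :=
  ∑ T : Finset (Fin n), (fun S => diffOp (f T) (thetaDerivList (T.sort (· ≤ ·)) g S))

/-- The diagonal action of a permutation `w` on superspace:
`w · x_i = x_{w(i)}` and `w · θ_i = θ_{w(i)}`. -/
noncomputable def permAct {n : ℕ} (w : Equiv.Perm (Fin n)) (F : Superspace n) : Superspace n :=
  fun S =>
    ((-1 : ℚ) ^ (((S.image w.symm) ×ˢ (S.image w.symm)).filter
        (fun p => p.1 < p.2 ∧ w p.2 < w p.1)).card) •
      MvPolynomial.rename w (F (S.image w.symm))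

/-- The supermonomial `x^a · θ_T`. -/
noncomputable def sMono {n : ℕ} (a : Fin n →₀ ℕ) (T : Finset (Fin n)) : Superspace n :=
  fun S => if S = T then MvPolynomial.monomial a (1 : ℚ) else 0

/-- The `a`-superspace Vandermonde
`Δ_n(a) = ε_n · (x_1^{a_1} ⋯ x_r^{a_r} x_{r+1}^{k-1} ⋯ x_n^0 · θ_1 ⋯ θ_r)` (with `n = k + r`). -/
noncomputable def superVandermonde (n r : ℕ) (a : Fin r → ℕ) : Superspace n :=
  ∑ w : Equiv.Perm (Fin n),
    ((Equiv.Perm.sign w : ℤ) : ℚ) •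
      permAct w (sMono
        (Finsupp.equivFunOnFinite.symm
          (fun i : Fin n => if h : (i : ℕ) < r then a ⟨(i : ℕ), h⟩ else n - 1 - (i : ℕ)))
        (Finset.univ.filter (fun i : Fin n => (i : ℕ) < r)))

/-- Multiplication in superspace (the `θ`-variables anticommute). -/
noncomputable def superMul {n : ℕ} (F G : Superspace n) : Superspace n :=
  fun S => ∑ T ∈ S.powerset,
    ((-1 : ℚ) ^ ((T ×ˢ (S \ T)).filter (fun p => p.2 < p.1)).card) • (F T * G (S \ T))

/-- The bilinear form `⟨f, g⟩` = constant term of `∂(f)(g)`. -/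
noncomputable def superPairing {n : ℕ} (f g : Superspace n) : ℚ :=
  MvPolynomial.constantCoeff (superAct f g ∅)

/-- `V_n(a)`: the smallest subspace of superspace containing `Δ_n(a)` which is closed
under the partial derivatives `∂_1, …, ∂_n`. -/
noncomputable def Vspace (n r : ℕ) (a : Fin r → ℕ) : Submodule ℚ (Superspace n) :=
  sInf {W : Submodule ℚ (Superspace n) |
    superVandermonde n r a ∈ W ∧ ∀ i : Fin n, ∀ F ∈ W, xDeriv i F ∈ W}

/-- `W_n(a)`: the smallest subspace of superspace containing `Δ_n(a)` which is closed
under `∂_1, …, ∂_n` and `∂_1^θ, …, ∂_n^θ`. -/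
noncomputable def Wspace (n r : ℕ) (a : Fin r → ℕ) : Submodule ℚ (Superspace n) :=
  sInf {W : Submodule ℚ (Superspace n) |
    superVandermonde n r a ∈ W ∧ (∀ i : Fin n, ∀ F ∈ W, xDeriv i F ∈ W) ∧
      (∀ i : Fin n, ∀ F ∈ W, thetaDeriv i F ∈ W)}

/-- A superpolynomial is `θ`-homogeneous of `θ`-degree `r`. -/
def isThetaHomog {n : ℕ} (r : ℕ) (F : Superspace n) : Prop :=
  ∀ S : Finset (Fin n), S.card ≠ r → F S = 0

/-- An `(n,k,s)`-staircase: a shuffle of `(s-1, …, s-1)` (`n-k` copies) with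
`(k-1, k-2, …, 1, 0)`; `T` records the positions of the decreasing staircase part. -/
def isStaircase3 (n k s : ℕ) (b : Fin n → ℕ) : Prop :=
  ∃ T : Finset (Fin n), T.card = k ∧
    ∀ i : Fin n, b i = if i ∈ T then k - 1 - (T.filter (fun j => j < i)).card else s - 1

/-- `(n,k,s)`-substaircase sequences: componentwise `≤` at least one `(n,k,s)`-staircase. -/
def isSubstaircase3 (n k s : ℕ) (c : Fin n → ℕ) : Prop :=
  ∃ b : Fin n → ℕ, isStaircase3 n k s b ∧ ∀ i, c i ≤ b i

/-- The (signless) Stirling numbers of the second kind. -/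
def stirling2 : ℕ → ℕ → ℕ
  | 0, 0 => 1
  | 0, _ + 1 => 0
  | _ + 1, 0 => 0
  | n + 1, k + 1 => stirling2 n k + (k + 1) * stirling2 n (k + 1)

/-- The ideal `I_{n,k,s} = ⟨x_1^s, …, x_n^s, e_n, e_{n-1}, …, e_{n-k+1}⟩`. -/
noncomputable def Inks (n k s : ℕ) : Ideal (MvPolynomial (Fin n) ℚ) :=
  Ideal.span ((Set.range fun i : Fin n => (MvPolynomial.X i : MvPolynomial (Fin n) ℚ) ^ s) ∪
    ((fun d => MvPolynomial.esymm (Fin n) ℚ d) '' {d : ℕ | n - k < d ∧ d ≤ n}))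

/-- The `q`-number `[m]_q = 1 + q + ⋯ + q^{m-1}`. -/
noncomputable def qNum (m : ℕ) : Polynomial ℕ := ∑ i ∈ Finset.range m, Polynomial.X ^ i

/-- The `q`-factorial `[k]!_q`. -/
noncomputable def qFactorial : ℕ → Polynomial ℕ
  | 0 => 1
  | m + 1 => qNum (m + 1) * qFactorial m

/-- The `q`-Stirling numbers `Stir_q(n,k)`. -/
noncomputable def qStirling : ℕ → ℕ → Polynomial ℕ
  | 0, 0 => 1
  | 0, _ + 1 => 0
  | _ + 1, 0 => 0
  | n + 1, k + 1 => qStirling n k + qNum (k + 1) * qStirling n (k + 1)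

/-- The submodule of superspace of `x`-homogeneous elements of `x`-degree `d`. -/
noncomputable def xHomogSub (n d : ℕ) : Submodule ℚ (Superspace n) :=
  Submodule.pi Set.univ
    (fun _ : Finset (Fin n) => MvPolynomial.homogeneousSubmodule (Fin n) ℚ d)

/-- The submodule of superspace of `θ`-homogeneous elements of `θ`-degree `j`. -/
noncomputable def thetaHomogSub (n j : ℕ) : Submodule ℚ (Superspace n) where
  carrier := {F | ∀ S : Finset (Fin n), S.card ≠ j → F S = 0}
  add_mem' := by
    intro F G hF hG S hS
    show F S + G S = 0
    rw [hF S hS, hG S hS, add_zero]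
  zero_mem' := by intro S _; rfl
  smul_mem' := by
    intro c F hF S hS
    show c • F S = 0
    rw [hF S hS, smul_zero]

/-!
The coefficient of `x^m θ_S` in `Δ_n(a)` is nonzero exactly when some permutation carries the seed
monomial to `x^m θ_S` up to sign. The permutations that do so agree outside the initial segment of
`θ`-indices, where the seed exponents are distinct, so they all contribute the same sign.

Let `b` be a staircase whose decreasing part occupies the complement of `S`. Then `b` is the
lexicographically largest exponent of `θ_S` in `Δ_n(a)`. Choose such a `b ≥ c` for every
substaircase `c`: the coefficient of `x^(b-c) θ_S` in `∂^d Δ_n(a)` is a nonzero multiple of that of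
`x^(b-c+d) θ_S` in `Δ_n(a)`, so it is nonzero for `d = c` and vanishes for `d > c`. This
triangularity yields linear independence.

Substaircases below shuffles of `k-1, …, 0` with the constant `k+t-1` are counted by their first
entry: an entry less than `k` may precede any such sequence for `k-1` and `t+1`, an entry in
`[k, k+t)` any such sequence for `k` and `t`. These choices give `k!` times a `t`-Stirling number
by the cross recurrence of `r`-Stirling numbers, and for `t = 0` this is `k! · Stir(n,k)`.
-/

section LinearIndependence

theorem linearIndependent_of_triangular {ι α K M : Type*} [LinearOrder α] [Ring K]
    [NoZeroDivisors K] [AddCommGroup M] [Module K M] {v : ι → M} (f : ι → M →ₗ[K] K)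
    {o : ι → α} (ho : Function.Injective o) (hdiag : ∀ i, f i (v i) ≠ 0)
    (hzero : ∀ i j, o i < o j → f i (v j) = 0) : LinearIndependent K v := by
  classical
  rw [linearIndependent_iff']
  intro s g hg
  by_contra! hcon
  obtain ⟨i₀, hi₀, hg₀⟩ := hcon
  obtain ⟨i, hi, hmin⟩ := Finset.exists_min_image (s.filter fun i => g i ≠ 0) o
    ⟨i₀, Finset.mem_filter.mpr ⟨hi₀, hg₀⟩⟩
  obtain ⟨his, hgi⟩ := Finset.mem_filter.mp hi
  have hoff : ∀ j ∈ s, j ≠ i → g j * f i (v j) = 0 := by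
    intro j hj hji
    by_cases hgj : g j = 0
    · rw [hgj, zero_mul]
    · have hle : o i ≤ o j := hmin j (Finset.mem_filter.mpr ⟨hj, hgj⟩)
      rw [hzero i j (hle.lt_of_ne (ho.ne hji.symm)), mul_zero]
  have hsum : g i * f i (v i) = 0 := by
    rw [← Finset.sum_eq_single_of_mem i his hoff]
    simpa using congrArg (f i) hg
  exact mul_ne_zero hgi (hdiag i) hsum

end LinearIndependence

section Lex

theorem toLex_le_of_antitoneOn {ι β : Type*} [LinearOrder ι] [WellFoundedLT ι] [LinearOrder β]
    {m b : ι → β} {s : Set ι} (hb : AntitoneOn b s) (hinj : Set.InjOn m s)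
    (hmaps : Set.MapsTo m s (b '' s)) (heq : Set.EqOn m b sᶜ) : toLex m ≤ toLex b := by
  by_contra! hlt
  obtain ⟨i, hagree, hi : b i < m i⟩ := hlt
  have his : i ∈ s := by
    by_contra his
    exact hi.ne' (heq his)
  obtain ⟨j, hjs, hj⟩ := hmaps his
  have hji : j < i := hb.reflect_lt his hjs (hj ▸ hi)
  have hmj : b j = m j := hagree j hji
  exact hji.ne (hinj hjs his (hmj.symm.trans hj))

end Lex

section DiffOp

variable {n : ℕ}

theorem coeff_diffOp_monomial (c m : Fin n →₀ ℕ) (q : MvPolynomial (Fin n) ℚ) :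
    (diffOp (monomial c (1 : ℚ)) q).coeff m =
      q.coeff (m + c) * ∏ i, ((m i + c i).descFactorial (c i) : ℚ) := by
  classical
  rw [diffOp, support_monomial, if_neg one_ne_zero, Finset.sum_singleton, coeff_sum,
    Finset.sum_eq_single (m + c)]
  · simp
  · intro b _ hb
    rw [coeff_smul, coeff_monomial m (b - c)]
    split_ifs with hbc
    · have hcb : ¬ c ≤ b := fun hcb => hb (by rw [← hbc, tsub_add_cancel_of_le hcb])
      obtain ⟨i, hi⟩ := not_forall.mp hcb
      have hprod : ∏ i, ((b i).descFactorial (c i) : ℚ) = 0 :=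
        Finset.prod_eq_zero (Finset.mem_univ i)
          (by rw [Nat.descFactorial_eq_zero_iff_lt.mpr (not_le.mp hi), Nat.cast_zero])
      simp [hprod]
    · simp
  · intro h
    simp [notMem_support_iff.mp h]

theorem diffOp_monomial_zero (q : MvPolynomial (Fin n) ℚ) :
    diffOp (monomial 0 (1 : ℚ)) q = q := by
  ext m
  rw [coeff_diffOp_monomial]
  simp

theorem diffOp_monomial_add (c d : Fin n →₀ ℕ) (q : MvPolynomial (Fin n) ℚ) :
    diffOp (monomial (c + d) (1 : ℚ)) q =
      diffOp (monomial c (1 : ℚ)) (diffOp (monomial d (1 : ℚ)) q) := by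
  ext m
  have hfactor (i : Fin n) : (m i + (c i + d i)).descFactorial (c i + d i) =
      (m i + c i + d i).descFactorial (d i) * (m i + c i).descFactorial (c i) := by
    rw [← Nat.descFactorial_mul_descFactorial (Nat.le_add_left (d i) (c i)), ← add_assoc,
      Nat.add_sub_cancel, Nat.add_sub_cancel, mul_comm]
  simp only [coeff_diffOp_monomial, Finsupp.add_apply, hfactor, Nat.cast_mul,
    Finset.prod_mul_distrib, add_assoc, mul_assoc]

theorem diffOp_monomial_single_one (i : Fin n) (q : MvPolynomial (Fin n) ℚ) :
    diffOp (monomial (Finsupp.single i 1) (1 : ℚ)) q = pderiv i q := by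
  ext m
  rw [coeff_diffOp_monomial, coeff_pderiv, Finset.prod_eq_single_of_mem i (Finset.mem_univ i)]
  · simp
  · intro j _ hji
    simp [hji]

theorem pAct_monomial_mem {W : Submodule ℚ (Superspace n)}
    (hW : ∀ i, ∀ F ∈ W, xDeriv i F ∈ W) (c : Fin n →₀ ℕ) {F : Superspace n} (hF : F ∈ W) :
    pAct (monomial c (1 : ℚ)) F ∈ W := by
  have hzero (F : Superspace n) : pAct (monomial 0 (1 : ℚ)) F = F :=
    funext fun _ => diffOp_monomial_zero _
  have hadd (c d : Fin n →₀ ℕ) (F : Superspace n) : pAct (monomial (c + d) (1 : ℚ)) F =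
      pAct (monomial c (1 : ℚ)) (pAct (monomial d (1 : ℚ)) F) :=
    funext fun _ => diffOp_monomial_add _ _ _
  have hsingle (i : Fin n) (F : Superspace n) :
      pAct (monomial (Finsupp.single i 1) (1 : ℚ)) F = xDeriv i F :=
    funext fun _ => diffOp_monomial_single_one _ _
  induction c using Finsupp.induction_linear generalizing F with
  | zero => rwa [hzero]
  | add c d hc hd => exact hadd c d F ▸ hc (hd hF)
  | single i a =>
    induction a with
    | zero => rwa [Finsupp.single_zero, hzero]
    | succ a ih =>
      rw [add_comm, Finsupp.single_add, hadd, hsingle]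
      exact hW i _ ih

theorem pAct_monomial_superVandermonde_mem_Vspace {r : ℕ} (a : Fin r → ℕ) (c : Fin n →₀ ℕ) :
    pAct (monomial c (1 : ℚ)) (superVandermonde n r a) ∈ Vspace n r a :=
  Submodule.mem_sInf.mpr fun _ hW => pAct_monomial_mem hW.2 c hW.1

end DiffOp

section Sign

variable {n : ℕ}

/-- The inversions of `w` among the positions in `A`. For `A` the support of a `θ`-monomial, their
parity is the sign produced by sorting the `θ`-variables after applying `w`, see `permAct`. -/
def inversions (w : Equiv.Perm (Fin n)) (A : Finset (Fin n)) : Finset (Fin n × Fin n) :=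
  (A ×ˢ A).filter fun p => p.1 < p.2 ∧ w p.2 < w p.1

theorem sign_eq_neg_one_pow_card_inversions (w : Equiv.Perm (Fin n)) :
    (Equiv.Perm.sign w : ℤ) = (-1) ^ (inversions w Finset.univ).card := by
  have hIoi (i : Fin n) : Finset.Ioi i = Finset.univ.filter (i < ·) := by
    ext j
    simp
  rw [Equiv.Perm.sign_eq_prod_prod_Ioi, inversions, Finset.univ_product_univ, ← Finset.prod_const,
    Finset.prod_filter, ← Finset.univ_product_univ, Finset.prod_product]
  simp only [hIoi, Finset.prod_filter]
  push_cast
  refine Finset.prod_congr rfl fun i _ => Finset.prod_congr rfl fun j _ => ?_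
  by_cases hij : i < j
  · have hw : w i ≠ w j := w.injective.ne hij.ne
    by_cases hlt : w i < w j
    · simp [hij, hlt, hlt.not_gt]
    · simp [hij, hlt, lt_of_le_of_ne (not_lt.mp hlt) hw.symm]
  · simp [hij]

theorem card_inversions_univ (w : Equiv.Perm (Fin n)) {R : Finset (Fin n)}
    (hR : IsLowerSet (R : Set (Fin n))) :
    (inversions w Finset.univ).card = (inversions w R).card +
      ((((Rᶜ.image w)ᶜ ×ˢ Rᶜ).filter fun p => w p.2 < p.1).card + (inversions w Rᶜ).card) := by
  have hlt {i j : Fin n} (hi : i ∈ R) (hj : j ∉ R) : i < j :=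
    not_le.mp fun hji => hj (hR hji hi)
  have hcross : ((R ×ˢ Rᶜ).filter fun p => w p.2 < w p.1).card =
      (((Rᶜ.image w)ᶜ ×ˢ Rᶜ).filter fun p => w p.2 < p.1).card :=
    Finset.card_equiv (w.prodCongr (Equiv.refl _)) (by simp)
  have hsplit : inversions w Finset.univ = inversions w R ∪
      (((R ×ˢ Rᶜ).filter fun p => w p.2 < w p.1) ∪ inversions w Rᶜ) := by
    ext ⟨i, j⟩
    have hij := @hlt i j
    have hji := @hlt j i
    simp only [inversions, Finset.mem_filter, Finset.mem_union, Finset.mem_product,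
      Finset.mem_univ, Finset.mem_compl]
    grind
  have hdisj₁ : Disjoint (inversions w R)
      (((R ×ˢ Rᶜ).filter fun p => w p.2 < w p.1) ∪ inversions w Rᶜ) := by
    simp only [inversions, Finset.disjoint_left, Finset.mem_filter, Finset.mem_union,
      Finset.mem_product, Finset.mem_compl]
    tauto
  have hdisj₂ : Disjoint ((R ×ˢ Rᶜ).filter fun p => w p.2 < w p.1) (inversions w Rᶜ) := by
    simp only [inversions, Finset.disjoint_left, Finset.mem_filter, Finset.mem_product,
      Finset.mem_compl]
    tauto
  rw [hsplit, Finset.card_union_of_disjoint hdisj₁, Finset.card_union_of_disjoint hdisj₂, hcross]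

/-- Both sides equal `-1` to the number of inversions involving a position outside `R`, which for
an initial segment `R` depends only on the values of the permutation outside `R`. -/
theorem sign_mul_neg_one_pow_card_inversions_congr {R : Finset (Fin n)}
    (hR : IsLowerSet (R : Set (Fin n))) {w w' : Equiv.Perm (Fin n)} (h : ∀ i ∉ R, w i = w' i) :
    (Equiv.Perm.sign w : ℤ) * (-1) ^ (inversions w R).card =
      (Equiv.Perm.sign w' : ℤ) * (-1) ^ (inversions w' R).card := by
  have hsign (w : Equiv.Perm (Fin n)) :
      (Equiv.Perm.sign w : ℤ) * (-1) ^ (inversions w R).card =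
        (-1) ^ ((((Rᶜ.image w)ᶜ ×ˢ Rᶜ).filter fun p => w p.2 < p.1).card +
          (inversions w Rᶜ).card) := by
    rw [sign_eq_neg_one_pow_card_inversions, card_inversions_univ w hR, pow_add, mul_right_comm,
      ← mul_pow, neg_one_mul, neg_neg, one_pow, one_mul]
  have hcompl : ∀ i ∈ Rᶜ, w i = w' i := fun i hi => h i (Finset.mem_compl.mp hi)
  have himage : Rᶜ.image w = Rᶜ.image w' := Finset.image_congr hcompl
  have hcross : (((Rᶜ.image w)ᶜ ×ˢ Rᶜ).filter fun p => w p.2 < p.1) =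
      ((Rᶜ.image w')ᶜ ×ˢ Rᶜ).filter fun p => w' p.2 < p.1 := by
    rw [himage]
    refine Finset.filter_congr fun p hp => ?_
    rw [hcompl p.2 (Finset.mem_product.mp hp).2]
  have hinv : inversions w Rᶜ = inversions w' Rᶜ := by
    refine Finset.filter_congr fun p hp => ?_
    obtain ⟨h₁, h₂⟩ := Finset.mem_product.mp hp
    rw [hcompl p.1 h₁, hcompl p.2 h₂]
  rw [hsign, hsign, hcross, hinv]

end Sign

section Antisymmetrize

variable {n : ℕ}

/-- The antisymmetrization operator `ε_n` on superspace. Its value at the seed supermonomial is, by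
definition, the superspace Vandermonde. -/
noncomputable def antisymmetrize (F : Superspace n) : Superspace n :=
  ∑ w : Equiv.Perm (Fin n), ((Equiv.Perm.sign w : ℤ) : ℚ) • permAct w F

theorem coeff_permAct_sMono (w : Equiv.Perm (Fin n)) (e m : Fin n →₀ ℕ) (R S : Finset (Fin n)) :
    (permAct w (sMono e R) S).coeff m =
      if (∀ i, w i ∈ S ↔ i ∈ R) ∧ ∀ i, m (w i) = e i then
        (-1) ^ (inversions w R).card else 0 := by
  have himage : S.image w.symm = R ↔ ∀ i, w i ∈ S ↔ i ∈ R := by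
    simp [Finset.ext_iff, Equiv.symm_apply_eq]
  have hexp : e.mapDomain w = m ↔ ∀ i, m (w i) = e i := by
    constructor
    · rintro rfl i
      exact Finsupp.mapDomain_apply w.injective e i
    · intro h
      ext j
      obtain ⟨i, rfl⟩ := w.surjective j
      rw [Finsupp.mapDomain_apply w.injective, h]
  simp only [permAct, coeff_smul, sMono, ← himage, ← hexp]
  by_cases h : S.image w.symm = R
  · simp [h, rename_monomial, coeff_monomial, inversions]
  · simp [h]

theorem coeff_antisymmetrize_sMono (e m : Fin n →₀ ℕ) (R S : Finset (Fin n)) :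
    (antisymmetrize (sMono e R) S).coeff m =
      ∑ w : Equiv.Perm (Fin n) with (∀ i, w i ∈ S ↔ i ∈ R) ∧ ∀ i, m (w i) = e i,
        (((Equiv.Perm.sign w : ℤ) * (-1) ^ (inversions w R).card : ℤ) : ℚ) := by
  rw [antisymmetrize, Finset.sum_apply, coeff_sum, Finset.sum_filter]
  refine Finset.sum_congr rfl fun w _ => ?_
  rw [Pi.smul_apply, coeff_smul, coeff_permAct_sMono]
  simp

/-- The permutations contributing to a given coefficient all agree outside `R`, so they contribute
with the same sign and nothing cancels. -/
theorem coeff_antisymmetrize_sMono_ne_zero_iff {e m : Fin n →₀ ℕ} {R S : Finset (Fin n)}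
    (hR : IsLowerSet (R : Set (Fin n))) (he : Set.InjOn e (R : Set (Fin n))ᶜ) :
    (antisymmetrize (sMono e R) S).coeff m ≠ 0 ↔
      ∃ w : Equiv.Perm (Fin n), (∀ i, w i ∈ S ↔ i ∈ R) ∧ ∀ i, m (w i) = e i := by
  rw [coeff_antisymmetrize_sMono]
  constructor
  · intro hne
    obtain ⟨w, hw, _⟩ := Finset.exists_ne_zero_of_sum_ne_zero hne
    exact ⟨w, (Finset.mem_filter.mp hw).2⟩
  · rintro ⟨w₀, hw₀⟩
    have hagree : ∀ w : Equiv.Perm (Fin n),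
        ((∀ i, w i ∈ S ↔ i ∈ R) ∧ ∀ i, m (w i) = e i) → ∀ i ∉ R, w i = w₀ i := by
      rintro w ⟨hwS, hwe⟩ i hi
      obtain ⟨j, hj⟩ := w₀.surjective (w i)
      have hjR : j ∉ R := by rwa [← hw₀.1, hj, hwS]
      have hje : e j = e i := by rw [← hw₀.2, hj, hwe]
      rw [← hj, he hjR hi hje]
    have hsign : ∀ w ∈ Finset.univ.filter fun w : Equiv.Perm (Fin n) =>
        (∀ i, w i ∈ S ↔ i ∈ R) ∧ ∀ i, m (w i) = e i,
        (((Equiv.Perm.sign w : ℤ) * (-1) ^ (inversions w R).card : ℤ) : ℚ) =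
          ((Equiv.Perm.sign w₀ : ℤ) * (-1) ^ (inversions w₀ R).card : ℤ) := fun w hw =>
      congrArg _ (sign_mul_neg_one_pow_card_inversions_congr hR
        (hagree w (Finset.mem_filter.mp hw).2))
    rw [Finset.sum_congr rfl hsign, Finset.sum_const, nsmul_eq_mul]
    refine mul_ne_zero (Nat.cast_ne_zero.mpr (Finset.card_ne_zero.mpr ⟨w₀, ?_⟩)) (by simp)
    exact Finset.mem_filter.mpr ⟨Finset.mem_univ _, hw₀⟩

theorem exists_perm_of_bijOn {α β : Type*} [Finite α] {f g : α → β} {s t : Set α} {u : Set β}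
    (hf : Set.BijOn f s u) (hg : Set.BijOn g t u) :
    ∃ w : Equiv.Perm α, (∀ i, w i ∈ t ↔ i ∈ s) ∧ ∀ i ∈ s, g (w i) = f i := by
  classical
  let φ : s ≃ t := (hf.equiv f).trans (hg.equiv g).symm
  refine ⟨φ.extendSubtype, fun i => ⟨fun hi => ?_, φ.extendSubtype_mem i⟩, fun i hi => ?_⟩
  · by_contra his
    exact φ.extendSubtype_not_mem i his hi
  · have hφ : hg.equiv g (φ ⟨i, hi⟩) = hf.equiv f ⟨i, hi⟩ := by simp [φ]
    rw [φ.extendSubtype_apply_of_mem i hi]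
    exact congrArg Subtype.val hφ

theorem coeff_antisymmetrize_sMono_ne_zero_iff_bijOn {e m : Fin n →₀ ℕ} {R S : Finset (Fin n)}
    {d : ℕ} {u : Set ℕ} (hR : IsLowerSet (R : Set (Fin n))) (heR : ∀ i ∈ R, e i = d)
    (he : Set.BijOn e (R : Set (Fin n))ᶜ u) :
    (antisymmetrize (sMono e R) S).coeff m ≠ 0 ↔
      (∀ i ∈ S, m i = d) ∧ Set.BijOn m (S : Set (Fin n))ᶜ u := by
  rw [coeff_antisymmetrize_sMono_ne_zero_iff hR he.injOn]
  constructor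
  · rintro ⟨w, hwS, hwe⟩
    have hm (x : Fin n) : m x = e (w.symm x) := by rw [← hwe, w.apply_symm_apply]
    have hS (x : Fin n) : x ∈ S ↔ w.symm x ∈ R := by rw [← hwS, w.apply_symm_apply]
    exact ⟨fun x hx => (hm x).trans (heR _ ((hS x).mp hx)),
      (he.comp (w.symm.bijOn fun x => not_congr (hS x).symm)).congr fun x _ => (hm x).symm⟩
  · rintro ⟨hmS, hm⟩
    obtain ⟨w, hw, hwe⟩ := exists_perm_of_bijOn he hm
    have hwS (i : Fin n) : w i ∈ S ↔ i ∈ R := not_iff_not.mp (hw i)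
    refine ⟨w, hwS, fun i => ?_⟩
    by_cases hi : i ∈ R
    · rw [hmS _ ((hwS i).mpr hi), heR i hi]
    · exact hwe i hi

theorem coeff_superVandermonde_const_ne_zero_iff {k r d : ℕ} (hn : k + r = n)
    {m : Fin n →₀ ℕ} {S : Finset (Fin n)} :
    (superVandermonde n r (fun _ => d) S).coeff m ≠ 0 ↔
      (∀ i ∈ S, m i = d) ∧ Set.BijOn m (S : Set (Fin n))ᶜ (Set.Iio k) := by
  set R : Finset (Fin n) := Finset.univ.filter fun i => (i : ℕ) < r with hRdef
  set e : Fin n →₀ ℕ := Finsupp.equivFunOnFinite.symm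
    fun i => if _ : (i : ℕ) < r then d else n - 1 - (i : ℕ) with hedef
  have hmemR {i : Fin n} : i ∈ R ↔ (i : ℕ) < r := by simp [hRdef]
  have hR : IsLowerSet (R : Set (Fin n)) := fun i j hji hi =>
    hmemR.mpr (lt_of_le_of_lt hji (hmemR.mp hi))
  have heR (i : Fin n) (hi : i ∈ R) : e i = d := by simp [hedef, hmemR.mp hi]
  have heRc {i : Fin n} (hi : i ∉ R) : e i = n - 1 - i := by simp [hedef, mt hmemR.mpr hi]
  have he : Set.BijOn e (R : Set (Fin n))ᶜ (Set.Iio k) := by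
    refine ⟨fun i hi => ?_, fun i hi j hj hij => ?_, fun v hv => ?_⟩
    · have := mt hmemR.mpr hi
      rw [heRc hi, Set.mem_Iio]
      omega
    · rw [heRc hi, heRc hj] at hij
      omega
    · rw [Set.mem_Iio] at hv
      have hi : (⟨n - 1 - v, by omega⟩ : Fin n) ∉ R := mt hmemR.mp (by dsimp only; omega)
      exact ⟨_, hi, by rw [heRc hi]; dsimp only; omega⟩
  exact coeff_antisymmetrize_sMono_ne_zero_iff_bijOn hR heR he

end Antisymmetrize

section Staircase

variable {n k s : ℕ} {b c : Fin n → ℕ}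

theorem isStaircase3.exists_strictAntiOn (hb : isStaircase3 n k s b) :
    ∃ S : Finset (Fin n), (∀ i ∈ S, b i = s - 1) ∧
      Set.BijOn b (S : Set (Fin n))ᶜ (Set.Iio k) ∧ StrictAntiOn b (S : Set (Fin n))ᶜ := by
  obtain ⟨T, hT, hb⟩ := hb
  have hTb {i : Fin n} (hi : i ∈ T) : b i = k - 1 - (T.filter (· < i)).card := by
    rw [hb, if_pos hi]
  have hlt {i : Fin n} (hi : i ∈ T) : (T.filter (· < i)).card < k := by
    rw [← hT]
    exact Finset.card_lt_card (Finset.filter_ssubset.mpr ⟨i, hi, lt_irrefl i⟩)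
  have hanti : StrictAntiOn b T := by
    intro j hj i hi hji
    have hcard : (T.filter (· < j)).card < (T.filter (· < i)).card :=
      Finset.card_lt_card <| (Finset.ssubset_iff_of_subset fun x => by
        simp only [Finset.mem_filter]; exact fun hx => ⟨hx.1, hx.2.trans hji⟩).mpr
          ⟨j, by simpa [hji] using hj, by simp⟩
    rw [hTb hi, hTb hj]
    have := hlt hi
    omega
  have hmaps : Set.MapsTo b T (Finset.range k) := by
    intro i hi
    have := hlt hi
    rw [hTb hi, Finset.coe_range, Set.mem_Iio]
    omega
  have hsurj : Set.SurjOn b T (Finset.range k) :=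
    Finset.surjOn_of_injOn_of_card_le b hmaps hanti.injOn (by rw [Finset.card_range, hT])
  refine ⟨Tᶜ, fun i hi => by rw [hb, if_neg (Finset.mem_compl.mp hi)], ?_, ?_⟩
  · simpa using! Set.BijOn.mk hmaps hanti.injOn hsurj
  · simpa using! hanti

theorem linearIndependent_pAct_superVandermonde {r : ℕ} (hn : k + r = n) (s : ℕ) :
    LinearIndependent ℚ
      (fun c : {c : Fin n → ℕ // isSubstaircase3 n k s c} =>
        pAct (monomial (Finsupp.equivFunOnFinite.symm c.1) (1 : ℚ))
          (superVandermonde n r (fun _ => s - 1))) := by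
  choose b hb hcb using fun c : {c : Fin n → ℕ // isSubstaircase3 n k s c} => c.2
  choose S hbS hbij hanti using fun c => (hb c).exists_strictAntiOn
  let gap (c : {c : Fin n → ℕ // isSubstaircase3 n k s c}) : Fin n →₀ ℕ :=
    Finsupp.equivFunOnFinite.symm (b c - c.1)
  refine linearIndependent_of_triangular
    (fun c => lcoeff ℚ (gap c) ∘ₗ LinearMap.proj (S c))
    (o := fun c => toLex c.1) (fun c d h => Subtype.ext h) (fun c => ?_) (fun c d hcd => ?_)
  · have hsum : ⇑(gap c + Finsupp.equivFunOnFinite.symm c.1) = b c :=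
      tsub_add_cancel_of_le (hcb c)
    have hcoeff : (superVandermonde n r (fun _ => s - 1) (S c)).coeff
        (gap c + Finsupp.equivFunOnFinite.symm c.1) ≠ 0 :=
      (coeff_superVandermonde_const_ne_zero_iff hn).mpr (hsum ▸ ⟨hbS c, hbij c⟩)
    simpa [pAct, coeff_diffOp_monomial, Finset.prod_ne_zero_iff] using hcoeff
  · suffices hcoeff : (superVandermonde n r (fun _ => s - 1) (S c)).coeff
        (gap c + Finsupp.equivFunOnFinite.symm d.1) = 0 by
      simp [pAct, coeff_diffOp_monomial, hcoeff]
    by_contra hne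
    obtain ⟨hmS, hm⟩ := (coeff_superVandermonde_const_ne_zero_iff hn).mp hne
    have hle : toLex (b c - c.1 + d.1) ≤ toLex (b c) :=
      toLex_le_of_antitoneOn (hanti c).antitoneOn hm.injOn
        (by rw [(hbij c).image_eq]; exact hm.mapsTo)
        (fun i hi => (hmS i (not_not.mp hi)).trans (hbS c i (not_not.mp hi)).symm)
    have hlt : toLex (b c) < toLex (b c - c.1 + d.1) := by
      have hlt' : toLex (b c - c.1 + c.1) < toLex (b c - c.1 + d.1) :=
        add_lt_add_right hcd (toLex (b c - c.1))
      rwa [tsub_add_cancel_of_le (hcb c)] at hlt'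
    exact hle.not_gt hlt

theorem isStaircase3.cons_top (hb : isStaircase3 n k s b) :
    isStaircase3 (n + 1) (k + 1) s (Fin.cons k b) := by
  obtain ⟨T, hT, hb⟩ := hb
  refine ⟨insert 0 (T.map (Fin.succEmb n)), by simp [Fin.succ_ne_zero, hT],
    Fin.cases (by simp) fun i => ?_⟩
  have hfilter : (insert 0 (T.map (Fin.succEmb n))).filter (· < i.succ) =
      insert 0 ((T.filter (· < i)).map (Fin.succEmb n)) := by
    simp [Finset.filter_insert, Finset.filter_map, Function.comp_def]
  have hcard : k - ((T.filter (· < i)).card + 1) = k - 1 - (T.filter (· < i)).card := by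
    omega
  simp [hfilter, hb, Fin.succ_ne_zero, hcard]

theorem isStaircase3.cons_const (hb : isStaircase3 n k s b) :
    isStaircase3 (n + 1) k s (Fin.cons (s - 1) b) := by
  obtain ⟨T, hT, hb⟩ := hb
  refine ⟨T.map (Fin.succEmb n), by simp [hT], Fin.cases (by simp [Fin.succ_ne_zero]) fun i => ?_⟩
  have hfilter : (T.map (Fin.succEmb n)).filter (· < i.succ) =
      (T.filter (· < i)).map (Fin.succEmb n) := by
    simp [Finset.filter_map, Function.comp_def]
  simp [hfilter, hb]

theorem isSubstaircase3.cons_of_le_top {a : ℕ} (hc : isSubstaircase3 n k s c) (ha : a ≤ k) :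
    isSubstaircase3 (n + 1) (k + 1) s (Fin.cons a c) := by
  obtain ⟨b, hb, hcb⟩ := hc
  exact ⟨Fin.cons k b, hb.cons_top, Fin.cons_le_cons.mpr ⟨ha, hcb⟩⟩

theorem isSubstaircase3.cons_of_le_const {a : ℕ} (hc : isSubstaircase3 n k s c) (ha : a ≤ s - 1) :
    isSubstaircase3 (n + 1) k s (Fin.cons a c) := by
  obtain ⟨b, hb, hcb⟩ := hc
  exact ⟨Fin.cons (s - 1) b, hb.cons_const, Fin.cons_le_cons.mpr ⟨ha, hcb⟩⟩

theorem isSubstaircase3_zero {c : Fin 0 → ℕ} : isSubstaircase3 0 0 s c :=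
  ⟨c, ⟨∅, rfl, fun i => i.elim0⟩, fun _ => le_rfl⟩

end Staircase

section Counting

/-- The `r`-Stirling number of the second kind: the number of partitions of an `(n + r)`-element
set into `k + r` blocks such that `r` distinguished elements lie in different blocks. -/
def rStirling2 (r : ℕ) : ℕ → ℕ → ℕ
  | 0, 0 => 1
  | 0, _ + 1 => 0
  | n + 1, 0 => r * rStirling2 r n 0
  | n + 1, k + 1 => rStirling2 r n k + (r + (k + 1)) * rStirling2 r n (k + 1)

theorem rStirling2_zero (n k : ℕ) : rStirling2 0 n k = stirling2 n k := by
  induction n generalizing k with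
  | zero => cases k <;> rfl
  | succ n ih => cases k <;> simp [rStirling2, stirling2, ih]

theorem rStirling2_succ_succ' (r n k : ℕ) :
    rStirling2 r (n + 1) (k + 1) = rStirling2 (r + 1) n k + r * rStirling2 r n (k + 1) := by
  induction n generalizing k with
  | zero => cases k <;> simp [rStirling2]
  | succ n ih =>
    cases k with
    | zero =>
      have h := ih 0
      simp only [rStirling2] at h ⊢
      linear_combination (r + 1) * h
    | succ k =>
      have h := ih k
      have h' := ih (k + 1)
      simp only [rStirling2] at h h' ⊢
      linear_combination h + (r + (k + 1 + 1)) * h'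

open Cardinal

theorem card_substaircase_succ_zero (n s : ℕ) :
    s * #{c : Fin n → ℕ // isSubstaircase3 n 0 s c} ≤
      #{c : Fin (n + 1) → ℕ // isSubstaircase3 (n + 1) 0 s c} := by
  let cons (p : Fin s × {c : Fin n → ℕ // isSubstaircase3 n 0 s c}) :
      {c : Fin (n + 1) → ℕ // isSubstaircase3 (n + 1) 0 s c} :=
    ⟨Fin.cons p.1 p.2.1, p.2.2.cons_of_le_const (Nat.le_sub_one_of_lt p.1.2)⟩
  have hcons : Function.Injective cons := by
    rintro ⟨a, c⟩ ⟨a', c'⟩ h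
    obtain ⟨ha, hc⟩ := Fin.cons_injective2 (α := fun _ => ℕ) (Subtype.ext_iff.mp h)
    exact Prod.ext (Fin.ext ha) (Subtype.ext hc)
  simpa using mk_le_of_injective hcons

theorem card_substaircase_succ_succ (n k t : ℕ) :
    (k + 1) * #{c : Fin n → ℕ // isSubstaircase3 n k (k + 1 + t) c} +
        t * #{c : Fin n → ℕ // isSubstaircase3 n (k + 1) (k + 1 + t) c} ≤
      #{c : Fin (n + 1) → ℕ // isSubstaircase3 (n + 1) (k + 1) (k + 1 + t) c} := by
  let consTop (p : Fin (k + 1) × {c : Fin n → ℕ // isSubstaircase3 n k (k + 1 + t) c}) :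
      {c : Fin (n + 1) → ℕ // isSubstaircase3 (n + 1) (k + 1) (k + 1 + t) c} :=
    ⟨Fin.cons p.1 p.2.1, p.2.2.cons_of_le_top (Nat.le_of_lt_succ p.1.2)⟩
  let consConst (p : Fin t × {c : Fin n → ℕ // isSubstaircase3 n (k + 1) (k + 1 + t) c}) :
      {c : Fin (n + 1) → ℕ // isSubstaircase3 (n + 1) (k + 1) (k + 1 + t) c} :=
    ⟨Fin.cons (k + 1 + p.1) p.2.1, p.2.2.cons_of_le_const (by omega)⟩
  have hcons : Function.Injective (Sum.elim consTop consConst) := by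
    refine Function.Injective.sumElim ?_ ?_ ?_
    · rintro ⟨a, c⟩ ⟨a', c'⟩ h
      obtain ⟨ha, hc⟩ := Fin.cons_injective2 (α := fun _ => ℕ) (Subtype.ext_iff.mp h)
      exact Prod.ext (Fin.ext ha) (Subtype.ext hc)
    · rintro ⟨a, c⟩ ⟨a', c'⟩ h
      obtain ⟨ha, hc⟩ := Fin.cons_injective2 (α := fun _ => ℕ) (Subtype.ext_iff.mp h)
      exact Prod.ext (Fin.ext (Nat.add_left_cancel ha)) (Subtype.ext hc)
    · rintro ⟨a, c⟩ ⟨a', c'⟩ h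
      obtain ⟨ha, -⟩ := Fin.cons_injective2 (α := fun _ => ℕ) (Subtype.ext_iff.mp h)
      have := a.2
      omega
  simpa using mk_le_of_injective hcons

theorem factorial_mul_rStirling2_le_card_substaircase (n k t : ℕ) :
    ((k.factorial * rStirling2 t n k : ℕ) : Cardinal) ≤
      #{c : Fin n → ℕ // isSubstaircase3 n k (k + t) c} := by
  induction n generalizing k t with
  | zero =>
    cases k with
    | zero =>
      have : Nonempty {c : Fin 0 → ℕ // isSubstaircase3 0 0 t c} := ⟨⟨0, isSubstaircase3_zero⟩⟩
      simpa [rStirling2] using Cardinal.one_le_iff_ne_zero.mpr (mk_ne_zero _)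
    | succ k => simp [rStirling2]
  | succ n ih =>
    cases k with
    | zero =>
      calc ((Nat.factorial 0 * rStirling2 t (n + 1) 0 : ℕ) : Cardinal)
          = t * (Nat.factorial 0 * rStirling2 t n 0 : ℕ) := by simp [rStirling2]
        _ ≤ t * #{c : Fin n → ℕ // isSubstaircase3 n 0 t c} := by
          gcongr
          simpa using ih 0 t
        _ ≤ #{c : Fin (n + 1) → ℕ // isSubstaircase3 (n + 1) 0 (0 + t) c} := by
          simpa using card_substaircase_succ_zero n t
    | succ k =>
      calc (((k + 1).factorial * rStirling2 t (n + 1) (k + 1) : ℕ) : Cardinal)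
          = (k + 1) * (k.factorial * rStirling2 (t + 1) n k : ℕ) +
              t * ((k + 1).factorial * rStirling2 t n (k + 1) : ℕ) := by
            rw [rStirling2_succ_succ', Nat.factorial_succ]
            push_cast
            ring
        _ ≤ (k + 1) * #{c : Fin n → ℕ // isSubstaircase3 n k (k + 1 + t) c} +
              t * #{c : Fin n → ℕ // isSubstaircase3 n (k + 1) (k + 1 + t) c} := by
            gcongr
            · rw [add_right_comm, add_assoc]
              exact ih k (t + 1)
            · exact ih (k + 1) t
        _ ≤ _ := card_substaircase_succ_succ n k t

end Counting

theorem Vspace_dim_lower_bound_general (n k r s : ℕ) (hn : k + r = n) (hks : k ≤ s) :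
    LinearIndependent ℚ
      (fun c : {c : Fin n → ℕ // isSubstaircase3 n k s c} =>
        pAct (monomial (Finsupp.equivFunOnFinite.symm c.1) (1 : ℚ))
          (superVandermonde n r (fun _ => s - 1))) ∧
    ((k.factorial * rStirling2 (s - k) n k : ℕ) : Cardinal) ≤
      Module.rank ℚ (Vspace n r (fun _ => s - 1)) := by
  have hli := linearIndependent_pAct_superVandermonde hn s
  refine ⟨hli, ?_⟩
  calc ((k.factorial * rStirling2 (s - k) n k : ℕ) : Cardinal)
      ≤ Cardinal.mk {c : Fin n → ℕ // isSubstaircase3 n k s c} := by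
        simpa only [Nat.add_sub_cancel' hks] using
          factorial_mul_rStirling2_le_card_substaircase n k (s - k)
    _ = Module.rank ℚ (Submodule.span ℚ (Set.range _)) := by
        rw [rank_span hli, Cardinal.mk_range_eq _ hli.injective]
    _ ≤ Module.rank ℚ (Vspace n r fun _ => s - 1) :=
        Submodule.rank_mono <| Submodule.span_le.mpr <| Set.range_subset_iff.mpr fun _ =>
          pAct_monomial_superVandermonde_mem_Vspace _ _

/-- Lemma 3.5: for `k + r = n` and `a = (k-1, …, k-1)` of length `r`, the
derivatives `∂^c Δ_n(a)` over `(n,k)`-substaircase sequences `c` are linearly independent;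
consequently `dim V_n(a) ≥ k! · Stir(n,k)`. -/
theorem Vspace_dim_lower_bound (n k r : ℕ) (hn : k + r = n) :
    LinearIndependent ℚ
      (fun c : {c : Fin n → ℕ // isSubstaircase3 n k k c} =>
        pAct (MvPolynomial.monomial (Finsupp.equivFunOnFinite.symm c.1) (1 : ℚ))
          (superVandermonde n r (fun _ => k - 1))) ∧
    ((k.factorial * stirling2 n k : ℕ) : Cardinal) ≤
      Module.rank ℚ (↥(Vspace n r (fun _ => k - 1))) := by
  simpa only [Nat.sub_self, rStirling2_zero] using
    Vspace_dim_lower_bound_general n k r k hn le_rfl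
end

section
/- Let r < n be positive integers, let k = n − r, and let a = (0, 0, …, 0) be the zero sequence of length r. Then the Tanisaki ideal I_λ ⊆ ℚ[x_1,…,x_n] for the hook partition λ = (r+1, 1, 1, …, 1) ⊢ n — which is generated by the elementary symmetric polynomials e_1, e_2, …, e_n in all of the variables x_1,…,x_n together with all products x_{i_1} x_{i_2} ⋯ x_{i_k} of k distinct variables — equals the annihilator ann_{ℚ[x_n]} Δ_n(a) of the a-superspace Vandermonde. -/
open MvPolynomial

/-- The Tanisaki ideal `I_λ` for the hook `λ = (r+1, 1, …, 1) ⊢ n` (with `k = n - r`):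
generated by `e_1, …, e_n` together with all products of `k` distinct variables. -/
noncomputable def tanisakiHook (n k : ℕ) : Ideal (MvPolynomial (Fin n) ℚ) :=
  Ideal.span
    (((fun d => MvPolynomial.esymm (Fin n) ℚ d) '' {d : ℕ | 1 ≤ d ∧ d ≤ n}) ∪
      ((fun T : Finset (Fin n) =>
          ∏ i ∈ T, (MvPolynomial.X i : MvPolynomial (Fin n) ℚ)) ''
        {T : Finset (Fin n) | T.card = k}))

/-!
The coefficient of `Δ_n(0)` at `θ_S`, for `|S| = r`, is a nonzero multiple of the Vandermonde
polynomial in the `k` variables outside `S`, so the annihilator of `Δ_n(0)` is the intersection of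
the annihilators of the Vandermonde polynomials in `k` of the variables.

Expanding a Vandermonde determinant along its rows shows that every power sum of positive degree
kills it, hence so does every `e_d` with `d ≠ 0` by Newton's identities. Modulo the remaining
variables, `e_k` is the product of the `k` variables involved, so the products of `k` variables
kill it too.

For the converse, add one variable `u` at a time. The operator `∂_u^k` turns the Vandermonde
polynomial in `u` and `k` further variables into `k!` times the one in those `k` variables. So if
`g * X_u^j` with `j ≤ k` annihilates the larger polynomials, then `g` annihilates the smaller ones
and lies in the ideal for fewer variables by induction; this puts `g * X_u^j` in the larger ideal
modulo `X_u^(j+1)`. Starting from `f` itself, the power of `X_u` rises until `X_u^(k+1)`, which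
belongs to the ideal.
-/

section DifferentialAction

variable {σ R : Type*} [CommSemiring R]

theorem prod_descFactorial_add (a b c : σ →₀ ℕ) :
    ((a + b).prod fun i m => ((c i).descFactorial m : R)) =
      (a.prod fun i m => (((c - b) i).descFactorial m : R)) *
        b.prod fun i m => ((c i).descFactorial m : R) := by
  classical
  let s := a.support ∪ b.support
  rw [Finsupp.prod_of_support_subset (s := s) _ Finsupp.support_add _ (by simp),
    Finsupp.prod_of_support_subset (s := s) _ Finset.subset_union_left _ (by simp),
    Finsupp.prod_of_support_subset (s := s) _ Finset.subset_union_right _ (by simp),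
    ← Finset.prod_mul_distrib]
  refine Finset.prod_congr rfl fun i _ => ?_
  have := Nat.descFactorial_mul_descFactorial (n := c i) (Nat.le_add_left (b i) (a i))
  rw [Finsupp.add_apply, ← this, Nat.add_sub_cancel, Nat.cast_mul, Finsupp.tsub_apply]

/-- The differential operator `∂^a = ∏ᵢ ∂ᵢ^(a i)` attached to an exponent vector `a`. -/
noncomputable def monomialDiff (a : σ →₀ ℕ) : Module.End R (MvPolynomial σ R) :=
  (basisMonomials σ R).constr R fun b =>
    monomial (b - a) (a.prod fun i m => ((b i).descFactorial m : R))

theorem monomialDiff_monomial (a b : σ →₀ ℕ) (s : R) :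
    monomialDiff a (monomial b s) =
      monomial (b - a) (s * a.prod fun i m => ((b i).descFactorial m : R)) := by
  have basis_image : monomialDiff a (monomial b 1) =
      monomial (b - a) (a.prod fun i m => ((b i).descFactorial m : R)) := by
    simpa [monomialDiff] using (basisMonomials σ R).constr_basis R _ b
  rw [← mul_one s, ← smul_eq_mul s, ← smul_monomial, map_smul, basis_image, smul_monomial]
  simp

theorem monomialDiff_zero : monomialDiff (0 : σ →₀ ℕ) = (1 : Module.End R (MvPolynomial σ R)) :=
  (basisMonomials σ R).ext fun b => by simp [monomialDiff_monomial]

theorem monomialDiff_add (a b : σ →₀ ℕ) :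
    monomialDiff (R := R) (a + b) = monomialDiff a * monomialDiff b := by
  refine (basisMonomials σ R).ext fun c => ?_
  simp only [coe_basisMonomials, Module.End.mul_apply, monomialDiff_monomial,
    prod_descFactorial_add, tsub_tsub, add_comm b a, one_mul,
    mul_comm (b.prod _)]

/-- The action of polynomials on polynomials by constant coefficient differential operators:
`diffAction f` substitutes `∂ᵢ` for every variable `X i` of `f`. -/
noncomputable def diffAction : MvPolynomial σ R →ₐ[R] Module.End R (MvPolynomial σ R) :=
  AddMonoidAlgebra.lift R _ _
    { toFun := fun a => monomialDiff a.toAdd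
      map_one' := monomialDiff_zero
      map_mul' := fun a b => monomialDiff_add a.toAdd b.toAdd }

theorem diffAction_monomial (a : σ →₀ ℕ) (r : R) :
    diffAction (monomial a r) = r • monomialDiff a :=
  AddMonoidAlgebra.lift_single _ _ _

theorem diffAction_X (u : σ) : diffAction (X u : MvPolynomial σ R) = (pderiv u).toLinearMap := by
  refine (basisMonomials σ R).ext fun b => ?_
  rw [coe_basisMonomials, X, diffAction_monomial, one_smul, monomialDiff_monomial]
  simp [pderiv_monomial]

theorem diffAction_mul (f g q : MvPolynomial σ R) :
    diffAction (f * g) q = diffAction f (diffAction g q) := by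
  rw [map_mul, Module.End.mul_apply]

theorem diffAction_one_right (f : MvPolynomial σ R) :
    diffAction f 1 = C (constantCoeff f) := by
  induction f using MvPolynomial.induction_on with
  | C r => simp [smul_eq_C_mul]
  | add p q hp hq => simp [hp, hq]
  | mul_X p u _ => simp [diffAction_X]

theorem diffAction_X_pow_X_pow (u : σ) (d j : ℕ) :
    diffAction (X u ^ d) (X u ^ j : MvPolynomial σ R) = j.descFactorial d • X u ^ (j - d) := by
  rw [X_pow_eq_monomial, X_pow_eq_monomial, X_pow_eq_monomial, diffAction_monomial, one_smul,
    monomialDiff_monomial, ← Finsupp.single_tsub, Finsupp.prod_single_index (by simp),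
    Finsupp.single_eq_same, ← Nat.cast_smul_eq_nsmul R, smul_monomial, smul_eq_mul, one_mul,
    mul_one]

theorem diffAction_X_pow_mul {u : σ} {q : MvPolynomial σ R} (hq : pderiv u q = 0) (d : ℕ)
    (p : MvPolynomial σ R) : diffAction (X u ^ d) (p * q) = diffAction (X u ^ d) p * q := by
  induction d with
  | zero => simp
  | succ d ih =>
    rw [pow_succ', diffAction_mul, ih, diffAction_mul, diffAction_X]
    simp [hq, mul_comm]

theorem diffAction_X_pow_eq_zero {u : σ} {q : MvPolynomial σ R} (hq : pderiv u q = 0) {d : ℕ}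
    (hd : d ≠ 0) : diffAction (X u ^ d) q = 0 := by
  rw [← one_mul q, diffAction_X_pow_mul hq, diffAction_one_right]
  simp [hd]

/-- The annihilator of the polynomial `q` under the differential action `diffAction`. -/
noncomputable def diffAnnihilator (q : MvPolynomial σ R) : Ideal (MvPolynomial σ R) where
  carrier := {f | diffAction f q = 0}
  zero_mem' := by simp
  add_mem' {f g} hf hg := by
    rw [Set.mem_ofPred_eq] at hf hg ⊢
    rw [map_add, LinearMap.add_apply, hf, hg, add_zero]
  smul_mem' c f hf := by
    rw [Set.mem_ofPred_eq] at hf ⊢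
    rw [smul_eq_mul, diffAction_mul, hf, map_zero]

theorem mem_diffAnnihilator {f q : MvPolynomial σ R} :
    f ∈ diffAnnihilator q ↔ diffAction f q = 0 :=
  Iff.rfl

end DifferentialAction

theorem diffOp_eq_diffAction {n : ℕ} (p q : MvPolynomial (Fin n) ℚ) :
    diffOp p q = diffAction p q := by
  conv_rhs => rw [p.as_sum, q.as_sum]
  simp only [diffOp, map_sum, LinearMap.sum_apply, diffAction_monomial, LinearMap.smul_apply,
    monomialDiff_monomial, smul_monomial, smul_eq_mul, mul_one]
  rw [Finset.sum_comm]
  refine Finset.sum_congr rfl fun a _ => Finset.sum_congr rfl fun b _ => ?_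
  rw [Finsupp.prod_fintype _ _ (by simp), mul_assoc]

section Vandermonde

theorem derivation_det_eq_zero {R A n : Type*} [CommRing R] [CommRing A] [Algebra R A]
    [Fintype n] [DecidableEq n] (D : Derivation R A A) {M : Matrix n n A}
    (hM : ∀ i j, D (M i j) = 0) : D M.det = 0 := by
  have prod_eq_zero (w : Equiv.Perm n) : D (∏ i, M (w i) i) = 0 :=
    Finset.prod_induction _ (fun p => D p = 0) (fun p q hp hq => by simp [hp, hq])
      D.map_one_eq_zero fun i _ => hM (w i) i
  rw [Matrix.det_apply, map_sum]
  exact Finset.sum_eq_zero fun w _ => by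
    rw [Units.smul_def, map_zsmul, prod_eq_zero, smul_zero]

variable {σ R : Type*} [CommRing R] {k : ℕ}

/-- The Vandermonde matrix in the variables `X (t 0), …, X (t (k - 1))`. -/
noncomputable def vandermondeMatrix (t : Fin k → σ) :
    Matrix (Fin k) (Fin k) (MvPolynomial σ R) :=
  Matrix.vandermonde fun i => X (t i)

/-- The Vandermonde polynomial `∏_{i < j} (X (t j) - X (t i))`, encoded as a determinant. -/
noncomputable def vandermondePoly (t : Fin k → σ) : MvPolynomial σ R :=
  (vandermondeMatrix t).det

theorem pderiv_vandermondeMatrix_of_ne {t : Fin k → σ} {u : σ} {i : Fin k} (hi : t i ≠ u)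
    (j : Fin k) : pderiv u (vandermondeMatrix (R := R) t i j) = 0 := by
  simp [vandermondeMatrix, pderiv_X_of_ne hi]

theorem pderiv_vandermondePoly_of_notMem {t : Fin k → σ} {u : σ} (hu : ∀ i, t i ≠ u) :
    pderiv u (vandermondePoly (R := R) t) = 0 :=
  derivation_det_eq_zero _ fun i j => pderiv_vandermondeMatrix_of_ne (hu i) j

theorem pderiv_adjugate_vandermondeMatrix {t : Fin k → σ} (ht : t.Injective) (i j : Fin k) :
    pderiv (t i) ((vandermondeMatrix (R := R) t).adjugate j i) = 0 := by
  rw [Matrix.adjugate_apply]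
  refine derivation_det_eq_zero _ fun i' j' => ?_
  obtain rfl | hi := eq_or_ne i' i
  · obtain rfl | hj := eq_or_ne j' j <;> simp [*]
  · rw [Matrix.updateRow_ne hi, pderiv_vandermondeMatrix_of_ne (ht.ne hi)]

theorem diffAction_X_pow_vandermondePoly {t : Fin k → σ} (ht : t.Injective) (i : Fin k) (d : ℕ) :
    diffAction (X (t i) ^ d) (vandermondePoly (R := R) t) =
      ∑ j : Fin k, ((j : ℕ).descFactorial d • X (t i) ^ (j - d : ℕ)) *
        (vandermondeMatrix t).adjugate j i := by
  rw [vandermondePoly, Matrix.det_eq_sum_mul_adjugate_row _ i, map_sum]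
  refine Finset.sum_congr rfl fun j _ => ?_
  rw [diffAction_X_pow_mul (pderiv_adjugate_vandermondeMatrix ht i j), vandermondeMatrix,
    Matrix.vandermonde_apply, diffAction_X_pow_X_pow]

theorem sum_adjugate_vandermondeMatrix_mul_X_pow (t : Fin k → σ) {j : Fin k} {m : ℕ}
    (hm : m < j) :
    ∑ i, (vandermondeMatrix (R := R) t).adjugate j i * X (t i) ^ m = 0 := by
  have hmj : j ≠ ⟨m, hm.trans j.isLt⟩ := Fin.ne_of_gt hm
  have := congrFun₂ (vandermondeMatrix (R := R) t).adjugate_mul j ⟨m, hm.trans j.isLt⟩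
  simpa [Matrix.mul_apply, hmj, vandermondeMatrix] using this

theorem sum_diffAction_X_pow_vandermondePoly {t : Fin k → σ} (ht : t.Injective) {d : ℕ}
    (hd : d ≠ 0) :
    ∑ i, diffAction (X (t i) ^ d) (vandermondePoly (R := R) t) = 0 := by
  simp only [diffAction_X_pow_vandermondePoly ht]
  rw [Finset.sum_comm]
  refine Finset.sum_eq_zero fun j _ => ?_
  obtain hjd | hdj := lt_or_ge (j : ℕ) d
  · simp [Nat.descFactorial_of_lt hjd]
  · simp only [smul_mul_assoc, mul_comm (X _ ^ _), ← Finset.smul_sum]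
    rw [sum_adjugate_vandermondeMatrix_mul_X_pow t (by omega), smul_zero]

theorem psum_mem_diffAnnihilator_vandermondePoly [Fintype σ] {t : Fin k → σ} (ht : t.Injective)
    {d : ℕ} (hd : d ≠ 0) : psum σ R d ∈ diffAnnihilator (vandermondePoly t) := by
  rw [mem_diffAnnihilator, psum, map_sum, LinearMap.sum_apply,
    ← sum_diffAction_X_pow_vandermondePoly ht hd]
  refine (Fintype.sum_of_injective t ht _ _ (fun u hu => ?_) fun i => rfl).symm
  exact diffAction_X_pow_eq_zero (pderiv_vandermondePoly_of_notMem fun i hi => hu ⟨i, hi⟩) hd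

theorem isUnit_natCast_of_ne_zero {A : Type*} [Semiring A] [Algebra ℚ A] {d : ℕ} (hd : d ≠ 0) :
    IsUnit (d : A) := by
  simpa using (Nat.cast_ne_zero.2 hd : (d : ℚ) ≠ 0).isUnit.map (algebraMap ℚ A)

theorem esymm_mem_of_psum_mem [Fintype σ] [Algebra ℚ R] {I : Ideal (MvPolynomial σ R)}
    (h : ∀ d ≠ 0, psum σ R d ∈ I) {d : ℕ} (hd : d ≠ 0) : esymm σ R d ∈ I := by
  rw [← I.unit_mul_mem_iff_mem (isUnit_natCast_of_ne_zero hd), mul_esymm_eq_sum]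
  refine I.mul_mem_left _ (I.sum_mem fun a ha => I.mul_mem_left _ (h _ ?_))
  obtain ⟨hsum, hlt⟩ := Finset.mem_filter.1 ha
  have := Finset.HasAntidiagonal.mem_antidiagonal.1 hsum
  omega

theorem diffAction_X_last_pow_vandermondePoly {t : Fin (k + 1) → σ} (ht : t.Injective) :
    diffAction (X (t (Fin.last k)) ^ k) (vandermondePoly (R := R) t) =
      k.factorial • vandermondePoly fun i => t i.castSucc := by
  have adjugate_last : (vandermondeMatrix (R := R) t).adjugate (Fin.last k) (Fin.last k) =
      vandermondePoly fun i => t i.castSucc := by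
    rw [Matrix.adjugate_fin_succ_eq_det_submatrix, Even.neg_one_pow ⟨_, rfl⟩, one_mul,
      Fin.succAbove_last]
    rfl
  rw [diffAction_X_pow_vandermondePoly ht, Fin.sum_univ_castSucc, Finset.sum_eq_zero, zero_add,
    adjugate_last]
  · simp [Nat.descFactorial_self]
  · exact fun j _ => by simp [Nat.descFactorial_of_lt j.isLt]

variable {U : Finset σ}

variable (R) in
/-- The common annihilator of the Vandermonde polynomials of all ordered choices of `k` distinct
variables in `U`. -/
noncomputable def vandermondeAnnihilator (U : Finset σ) (k : ℕ) : Ideal (MvPolynomial σ R) :=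
  ⨅ t : Fin k ↪ σ, ⨅ _ : ∀ i, t i ∈ U, diffAnnihilator (vandermondePoly t)

theorem mem_vandermondeAnnihilator {f : MvPolynomial σ R} :
    f ∈ vandermondeAnnihilator R U k ↔
      ∀ t : Fin k ↪ σ, (∀ i, t i ∈ U) → diffAction f (vandermondePoly t) = 0 := by
  simp [vandermondeAnnihilator, mem_diffAnnihilator]

theorem vandermondeAnnihilator_anti {V : Finset σ} (hUV : U ⊆ V) :
    vandermondeAnnihilator R V k ≤ vandermondeAnnihilator R U k := fun _ hf =>
  mem_vandermondeAnnihilator.2 fun t ht =>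
    mem_vandermondeAnnihilator.1 hf t fun i => hUV (ht i)

variable [Algebra ℚ R] in
theorem mem_vandermondeAnnihilator_of_mul_X_pow_mem [DecidableEq σ] {u : σ} (hu : u ∉ U)
    {g : MvPolynomial σ R}
    (hg : g * X u ^ k ∈ vandermondeAnnihilator R (insert u U) (k + 1)) :
    g ∈ vandermondeAnnihilator R U k := by
  refine mem_vandermondeAnnihilator.2 fun t ht => ?_
  have hinj : (Fin.snoc t u : Fin (k + 1) → σ).Injective :=
    Fin.snoc_injective_iff.2 ⟨t.injective, fun ⟨i, hi⟩ => hu (hi ▸ ht i)⟩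
  have hmem : ∀ i, (Fin.snoc t u : Fin (k + 1) → σ) i ∈ insert u U :=
    Fin.lastCases (by simp) fun i => by simp [ht i]
  have hzero := mem_vandermondeAnnihilator.1 hg ⟨_, hinj⟩ hmem
  have top := diffAction_X_last_pow_vandermondePoly (R := R) hinj
  simp only [Fin.snoc_last, Fin.snoc_castSucc] at top
  rw [Function.Embedding.coeFn_mk, diffAction_mul, top, map_nsmul, nsmul_eq_mul] at hzero
  exact (isUnit_natCast_of_ne_zero k.factorial_ne_zero).mul_right_eq_zero.1 hzero

end Vandermonde

section HookIdeal

variable {σ R : Type*}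

theorem multiset_esymm_cons_succ [CommSemiring R] (a : R) (s : Multiset R) (d : ℕ) :
    (a ::ₘ s).esymm (d + 1) = s.esymm (d + 1) + a * s.esymm d := by
  simp [Multiset.esymm, Multiset.powersetCard_cons, Multiset.sum_map_mul_left]

variable [CommRing R]

theorem constantCoeff_eq_zero_iff_mem_idealOfVars {f : MvPolynomial σ R} :
    constantCoeff f = 0 ↔ f ∈ idealOfVars σ R := by
  rw [← pow_one (idealOfVars σ R), mem_pow_idealOfVars_iff']
  simp [constantCoeff_eq, Finsupp.degree_eq_zero_iff]

variable [Fintype σ]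

theorem esymm_card_sub_prod_X_mem (T : Finset σ) :
    esymm σ R T.card - ∏ i ∈ T, X i ∈ Ideal.span (X '' {i | i ∉ T}) := by
  classical
  have hT : T ∈ Finset.powersetCard T.card Finset.univ :=
    Finset.mem_powersetCard.2 ⟨Finset.subset_univ T, rfl⟩
  rw [esymm, ← Finset.add_sum_erase _ _ hT, add_sub_cancel_left]
  refine Ideal.sum_mem _ fun T' hT' => ?_
  obtain ⟨hne, hcard⟩ := Finset.mem_erase.1 hT'
  obtain ⟨i, hiT', hiT⟩ : ∃ i ∈ T', i ∉ T := Finset.not_subset.1 fun hsub =>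
    hne (Finset.eq_of_subset_of_card_le hsub (Finset.mem_powersetCard.1 hcard).2.ge)
  exact Ideal.mem_of_dvd _ (Finset.dvd_prod_of_mem X hiT')
    (Ideal.subset_span ⟨i, hiT, rfl⟩)

variable (R) in
/-- The hook Tanisaki ideal of the variables in `U`, for products of `k` variables, as an ideal
of the polynomial ring in all variables which also contains the variables outside `U`. Modulo the
latter it does not matter whether the other generators are taken in `σ` or only in `U`. -/
noncomputable def hookIdeal (U : Finset σ) (k : ℕ) : Ideal (MvPolynomial σ R) :=
  Ideal.span (esymm σ R '' {d | d ≠ 0} ∪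
    ((fun T : Finset σ => ∏ i ∈ T, X i) '' {T | T.card = k} ∪ X '' {i | i ∉ U}))

variable {U : Finset σ} {k : ℕ}

theorem esymm_mem_hookIdeal {d : ℕ} (hd : d ≠ 0) : esymm σ R d ∈ hookIdeal R U k :=
  Ideal.subset_span (.inl ⟨d, hd, rfl⟩)

theorem prod_X_mem_hookIdeal {T : Finset σ} (hT : T.card = k) :
    ∏ i ∈ T, X i ∈ hookIdeal R U k :=
  Ideal.subset_span (.inr (.inl ⟨T, hT, rfl⟩))

theorem X_mem_hookIdeal {i : σ} (hi : i ∉ U) : X i ∈ hookIdeal R U k :=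
  Ideal.subset_span (.inr (.inr ⟨i, hi, rfl⟩))

theorem hookIdeal_le {I : Ideal (MvPolynomial σ R)} (hesymm : ∀ d ≠ 0, esymm σ R d ∈ I)
    (hprod : ∀ T : Finset σ, T.card = k → ∏ i ∈ T, X i ∈ I) (hX : ∀ i ∉ U, X i ∈ I) :
    hookIdeal R U k ≤ I := by
  rw [hookIdeal, Ideal.span_le]
  rintro _ (⟨d, hd, rfl⟩ | ⟨T, hT, rfl⟩ | ⟨i, hi, rfl⟩)
  exacts [hesymm d hd, hprod T hT, hX i hi]

theorem prod_X_mem_of_esymm_card_mem {I : Ideal (MvPolynomial σ R)} {W : Finset σ}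
    (hW : esymm σ R W.card ∈ I) (hX : ∀ i ∉ W, X i ∈ I) {T : Finset σ} (hT : T.card = W.card) :
    ∏ i ∈ T, X i ∈ I := by
  classical
  by_cases hsub : T ⊆ W
  · obtain rfl := Finset.eq_of_subset_of_card_le hsub hT.ge
    have hspan : Ideal.span (X '' {i | i ∉ T}) ≤ I :=
      Ideal.span_le.2 (Set.image_subset_iff.2 hX)
    simpa using I.sub_mem hW (hspan (esymm_card_sub_prod_X_mem T))
  · obtain ⟨i, hiT, hiW⟩ := Finset.not_subset.1 hsub
    exact I.mem_of_dvd (Finset.dvd_prod_of_mem X hiT) (hX i hiW)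

-- Modulo the `esymm σ R d` with `d ≠ 0`, the elementary symmetric polynomial of degree `k` in
-- the variables other than `X u` is `(-X u) ^ k`.
theorem X_pow_mem_hookIdeal (u : σ) : X u ^ k ∈ hookIdeal R U k := by
  classical
  let s : Multiset (MvPolynomial σ R) := (Finset.univ.erase u).val.map X
  have esymm_succ (d : ℕ) : esymm σ R (d + 1) = s.esymm (d + 1) + X u * s.esymm d := by
    rw [← multiset_esymm_cons_succ, ← Multiset.map_cons, ← Finset.insert_val_of_notMem
      (Finset.notMem_erase u _), Finset.insert_erase (Finset.mem_univ u), esymm_eq_multiset_esymm]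
  have esymm_sub_mem (d : ℕ) : s.esymm d - (-X u) ^ d ∈ hookIdeal R U k := by
    induction d with
    | zero => simp [Multiset.esymm]
    | succ d ih =>
      have : s.esymm (d + 1) - (-X u) ^ (d + 1) =
          esymm σ R (d + 1) - X u * (s.esymm d - (-X u) ^ d) := by rw [esymm_succ]; ring
      exact this ▸ sub_mem (esymm_mem_hookIdeal d.succ_ne_zero) (Ideal.mul_mem_left _ _ ih)
  have esymm_mem : s.esymm k ∈ hookIdeal R U k := by
    rw [Finset.esymm_map_val]
    exact Ideal.sum_mem _ fun T hT => prod_X_mem_hookIdeal (Finset.mem_powersetCard.1 hT).2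
  have neg_pow_mem := sub_mem esymm_mem (esymm_sub_mem k)
  rwa [sub_sub_cancel, neg_pow, Ideal.unit_mul_mem_iff_mem _ ((isUnit_one.neg).pow k)]
    at neg_pow_mem

theorem hookIdeal_le_colon_X_pow [DecidableEq σ] {u : σ} {j : ℕ}
    (hj : j ≠ 0 ∨ k ≠ 0 ∧ U.card = k) :
    hookIdeal R U k ≤
      (hookIdeal R (insert u U) (k + 1) ⊔ Ideal.span {X u ^ (j + 1)}).colon {X u ^ j} := by
  set J := hookIdeal R (insert u U) (k + 1) ⊔ Ideal.span {X u ^ (j + 1)}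
  have hH : hookIdeal R (insert u U) (k + 1) ≤ J := le_sup_left
  have hesymm (d : ℕ) (hd : d ≠ 0) : esymm σ R d ∈ J.colon {X u ^ j} :=
    Ideal.le_colon (hH (esymm_mem_hookIdeal hd))
  have hXu : X u ∈ J.colon {X u ^ j} := by
    rw [Submodule.mem_colon_singleton, smul_eq_mul, ← pow_succ']
    exact (le_sup_right : _ ≤ J) (Ideal.mem_span_singleton_self _)
  have hX (i : σ) (hi : i ∉ U) : X i ∈ J.colon {X u ^ j} := by
    obtain rfl | hiu := eq_or_ne i u
    · exact hXu
    · exact Ideal.le_colon (hH (X_mem_hookIdeal (by simp [hi, hiu])))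
  refine hookIdeal_le hesymm (fun T hT => ?_) hX
  obtain hj | ⟨hk, rfl⟩ := hj
  · by_cases huT : u ∈ T
    · exact Ideal.mem_of_dvd _ (Finset.dvd_prod_of_mem X huT) hXu
    · obtain ⟨j, rfl⟩ := Nat.exists_eq_add_one_of_ne_zero hj
      have hprod : ∏ i ∈ insert u T, X i ∈ J :=
        hH (prod_X_mem_hookIdeal (by rw [Finset.card_insert_of_notMem huT, hT]))
      rw [Submodule.mem_colon_singleton, smul_eq_mul, pow_succ', ← mul_assoc, mul_comm _ (X u),
        ← Finset.prod_insert huT]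
      exact J.mul_mem_right _ hprod
  · exact prod_X_mem_of_esymm_card_mem (hesymm _ hk) hX hT

theorem hookIdeal_le_hookIdeal_insert_sup [DecidableEq σ] (u : σ) :
    hookIdeal R U k ≤ hookIdeal R (insert u U) k ⊔ Ideal.span {X u} := by
  refine hookIdeal_le (fun d hd => Ideal.mem_sup_left (esymm_mem_hookIdeal hd))
    (fun T hT => Ideal.mem_sup_left (prod_X_mem_hookIdeal hT)) fun i hi => ?_
  obtain rfl | hiu := eq_or_ne i u
  · exact Ideal.mem_sup_right (Ideal.mem_span_singleton_self _)
  · exact Ideal.mem_sup_left (X_mem_hookIdeal (by simp [hi, hiu]))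

theorem vandermondeAnnihilator_one_le_hookIdeal (hU : U.Nonempty) :
    vandermondeAnnihilator R U 1 ≤ hookIdeal R U 1 := by
  intro f hf
  obtain ⟨u, hu⟩ := hU
  have hf0 := mem_vandermondeAnnihilator.1 hf ⟨fun _ => u, Function.injective_of_subsingleton _⟩
    fun _ => hu
  have : constantCoeff f = 0 := by
    simpa [vandermondePoly, vandermondeMatrix, diffAction_one_right] using hf0
  refine Ideal.span_le.2 ?_ (constantCoeff_eq_zero_iff_mem_idealOfVars.1 this)
  rintro _ ⟨i, rfl⟩
  simpa using prod_X_mem_hookIdeal (R := R) (U := U) (Finset.card_singleton i)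

variable [Algebra ℚ R]

theorem hookIdeal_le_vandermondeAnnihilator (hk : k ≠ 0) :
    hookIdeal R U k ≤ vandermondeAnnihilator R U k := by
  refine le_iInf₂ fun t ht => ?_
  have hesymm (d : ℕ) (hd : d ≠ 0) : esymm σ R d ∈ diffAnnihilator (vandermondePoly t) :=
    esymm_mem_of_psum_mem
      (fun _ hd => psum_mem_diffAnnihilator_vandermondePoly t.injective hd) hd
  have hX (u : σ) (hu : u ∉ Finset.univ.map t) :
      X u ∈ diffAnnihilator (R := R) (vandermondePoly t) := by
    rw [mem_diffAnnihilator, diffAction_X]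
    exact pderiv_vandermondePoly_of_notMem fun i hi => hu (by simp [← hi])
  refine hookIdeal_le hesymm
    (fun T hT => prod_X_mem_of_esymm_card_mem (W := Finset.univ.map t) ?_ hX (by simpa using hT))
    fun u hu => hX u ?_
  · simpa using hesymm k hk
  · simp only [Finset.mem_map, Finset.mem_univ, true_and, not_exists]
    exact fun i hi => hu (hi ▸ ht i)

theorem vandermondeAnnihilator_insert_le_sup_X_pow_succ [DecidableEq σ] {u : σ} (hu : u ∉ U)
    {j : ℕ} (hk : k ≠ 0) (hjk : j ≤ k) (hj : j ≠ 0 ∨ U.card = k)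
    (ih : vandermondeAnnihilator R U k ≤ hookIdeal R U k)
    (hle : vandermondeAnnihilator R (insert u U) (k + 1) ≤
      hookIdeal R (insert u U) (k + 1) ⊔ Ideal.span {X u ^ j}) :
    vandermondeAnnihilator R (insert u U) (k + 1) ≤
      hookIdeal R (insert u U) (k + 1) ⊔ Ideal.span {X u ^ (j + 1)} := by
  intro f hf
  obtain ⟨h, hh, q, hq, rfl⟩ := Submodule.mem_sup.1 (hle hf)
  obtain ⟨g, rfl⟩ := Ideal.mem_span_singleton'.1 hq
  have hgX : g * X u ^ j ∈ vandermondeAnnihilator R (insert u U) (k + 1) := by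
    simpa using sub_mem hf (hookIdeal_le_vandermondeAnnihilator k.succ_ne_zero hh)
  have hgXk : g * X u ^ k ∈ vandermondeAnnihilator R (insert u U) (k + 1) := by
    rw [← pow_mul_pow_sub (X u) hjk, ← mul_assoc]
    exact Ideal.mul_mem_right _ _ hgX
  have hg : g ∈ hookIdeal R U k := ih (mem_vandermondeAnnihilator_of_mul_X_pow_mem hu hgXk)
  exact add_mem (Ideal.mem_sup_left hh) (Submodule.mem_colon_singleton.1
    (hookIdeal_le_colon_X_pow (hj.imp_right fun hU => ⟨hk, hU⟩) hg))

theorem vandermondeAnnihilator_insert_le_hookIdeal [DecidableEq σ] {u : σ} (hu : u ∉ U)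
    (hk : k ≠ 0) (hkU : k ≤ U.card)
    (ih : ∀ m ≠ 0, m ≤ U.card → vandermondeAnnihilator R U m ≤ hookIdeal R U m) :
    vandermondeAnnihilator R (insert u U) (k + 1) ≤ hookIdeal R (insert u U) (k + 1) := by
  have sup_X : vandermondeAnnihilator R (insert u U) (k + 1) ≤
      hookIdeal R (insert u U) (k + 1) ⊔ Ideal.span {X u ^ 1} := by
    obtain hU | hU := hkU.eq_or_lt
    · exact vandermondeAnnihilator_insert_le_sup_X_pow_succ hu hk k.zero_le (.inr hU.symm)
        (ih k hk hkU) (by simp [Ideal.span_singleton_one])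
    · rw [pow_one]
      exact (vandermondeAnnihilator_anti (Finset.subset_insert u U)).trans
        ((ih _ k.succ_ne_zero hU).trans (hookIdeal_le_hookIdeal_insert_sup u))
  have sup_X_pow (j : ℕ) (hj : 1 ≤ j) (hjk : j ≤ k + 1) :
      vandermondeAnnihilator R (insert u U) (k + 1) ≤
        hookIdeal R (insert u U) (k + 1) ⊔ Ideal.span {X u ^ j} := by
    induction j, hj using Nat.le_induction with
    | base => exact sup_X
    | succ j hj ihj =>
      exact vandermondeAnnihilator_insert_le_sup_X_pow_succ hu hk (by omega) (.inl (by omega))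
        (ih k hk hkU) (ihj (by omega))
  refine (sup_X_pow (k + 1) (by omega) le_rfl).trans (sup_le le_rfl ?_)
  exact (Ideal.span_singleton_le_iff_mem _).2 (X_pow_mem_hookIdeal u)

theorem vandermondeAnnihilator_eq_hookIdeal (hk : k ≠ 0) (hkU : k ≤ U.card) :
    vandermondeAnnihilator R U k = hookIdeal R U k := by
  classical
  refine le_antisymm ?_ (hookIdeal_le_vandermondeAnnihilator hk)
  induction U using Finset.induction_on generalizing k with
  | empty => exact absurd (Nat.le_zero.1 hkU) hk
  | insert u U hu ih =>
    obtain ⟨m, rfl⟩ := Nat.exists_eq_add_one_of_ne_zero hk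
    obtain rfl | hm := eq_or_ne m 0
    · exact vandermondeAnnihilator_one_le_hookIdeal (Finset.insert_nonempty u U)
    · rw [Finset.card_insert_of_notMem hu] at hkU
      exact vandermondeAnnihilator_insert_le_hookIdeal hu hm (by omega) fun m hm hmU => ih hm hmU

end HookIdeal

section Superspace

variable {r k : ℕ}

/-- The permutation of `Fin (r + k)` acting by `p` on the first `r` and by `q` on the last `k`
elements. -/
def blockPerm (p : Equiv.Perm (Fin r)) (q : Equiv.Perm (Fin k)) : Equiv.Perm (Fin (r + k)) :=
  finSumFinEquiv.permCongr (p.sumCongr q)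

theorem blockPerm_castAdd (p : Equiv.Perm (Fin r)) (q : Equiv.Perm (Fin k)) (i : Fin r) :
    blockPerm p q (Fin.castAdd k i) = Fin.castAdd k (p i) := by
  simp [blockPerm]

theorem blockPerm_natAdd (p : Equiv.Perm (Fin r)) (q : Equiv.Perm (Fin k)) (i : Fin k) :
    blockPerm p q (Fin.natAdd r i) = Fin.natAdd r (q i) := by
  simp [blockPerm]

theorem sign_blockPerm (p : Equiv.Perm (Fin r)) (q : Equiv.Perm (Fin k)) :
    Equiv.Perm.sign (blockPerm p q) = Equiv.Perm.sign p * Equiv.Perm.sign q := by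
  rw [blockPerm, Equiv.Perm.sign_permCongr, Equiv.Perm.sign_sumCongr]

theorem blockPerm_injective :
    Function.Injective fun pq : Equiv.Perm (Fin r) × Equiv.Perm (Fin k) =>
      blockPerm pq.1 pq.2 :=
  finSumFinEquiv.permCongr.injective.comp Equiv.Perm.sumCongrHom_injective

theorem exists_blockPerm_eq {w : Equiv.Perm (Fin (r + k))}
    (hw : ∀ i : Fin r, ∃ j : Fin r, w (Fin.castAdd k i) = Fin.castAdd k j) :
    ∃ pq : Equiv.Perm (Fin r) × Equiv.Perm (Fin k), blockPerm pq.1 pq.2 = w := by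
  obtain ⟨pq, hpq⟩ := Equiv.Perm.mem_sumCongrHom_range_of_perm_mapsTo_inl
    (σ := finSumFinEquiv.symm.permCongr w) (by
      rintro _ ⟨i, rfl⟩
      obtain ⟨j, hj⟩ := hw i
      exact ⟨j, by simp [hj]⟩)
  refine ⟨pq, ?_⟩
  rw [blockPerm, ← Equiv.eq_symm_apply]
  exact hpq

theorem neg_one_pow_card_inversions (p : Equiv.Perm (Fin r)) :
    (-1 : ℤˣ) ^ (Finset.univ.filter fun x : Fin r × Fin r => x.1 < x.2 ∧ p x.2 < p x.1).card =
      Equiv.Perm.sign p := by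
  rw [Equiv.Perm.sign_eq_prod_prod_Ioi, ← Finset.prod_const, Finset.prod_filter,
    Fintype.prod_prod_type]
  refine Finset.prod_congr rfl fun i _ => ?_
  rw [← Finset.filter_lt_eq_Ioi, Finset.prod_filter]
  refine Finset.prod_congr rfl fun j _ => ?_
  by_cases hij : i < j
  · obtain h | h := (p.injective.ne hij.ne).lt_or_gt <;> simp [hij, h, h.not_gt]
  · simp [hij]

/-- The positions `{0, …, r - 1}` of the odd variables in `θ_1 ⋯ θ_r`, inside `Fin (r + k)`. -/
def initialPositions (r k : ℕ) : Finset (Fin (r + k)) :=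
  Finset.univ.map (Fin.castAddEmb k)

theorem filter_lt_eq_initialPositions :
    (Finset.univ.filter fun i : Fin (r + k) => (i : ℕ) < r) = initialPositions r k := by
  ext i
  refine Fin.addCases (fun i => ?_) (fun i => ?_) i
  · simp [initialPositions]
  · simp [initialPositions, Fin.ext_iff]
    omega

theorem card_inversions_initialPositions {w : Equiv.Perm (Fin (r + k))}
    {s : Fin r → Fin (r + k)} {p : Equiv.Perm (Fin r)} (hs : StrictMono s)
    (hw : ∀ i : Fin r, w (Fin.castAdd k i) = s (p i)) :
    ((initialPositions r k ×ˢ initialPositions r k).filter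
      fun x => x.1 < x.2 ∧ w x.2 < w x.1).card =
    (Finset.univ.filter fun x : Fin r × Fin r => x.1 < x.2 ∧ p x.2 < p x.1).card := by
  rw [initialPositions, ← Finset.prodMap_map_product, Finset.filter_map, Finset.card_map]
  simp [Function.comp_def, hw, hs.lt_iff_lt, (Fin.strictMono_castAdd k).lt_iff_lt]

theorem rename_monomial_one {σ τ R : Type*} [Fintype σ] [CommSemiring R] (f : σ → τ)
    (e : σ →₀ ℕ) : rename f (monomial e (1 : R)) = ∏ i, X (f i) ^ e i := by
  rw [monomial_eq, C_1, one_mul, Finsupp.prod_fintype _ _ (by simp), map_prod]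
  simp

theorem permAct_sMono_eq_zero {n : ℕ} {w : Equiv.Perm (Fin n)} {S T : Finset (Fin n)}
    (h : S ≠ T.image w) (e : Fin n →₀ ℕ) : permAct w (sMono e T) S = 0 := by
  have : S.image w.symm ≠ T := by
    rintro rfl
    exact h (by simp [Finset.image_image])
  simp [permAct, sMono, this]

theorem permAct_sMono_initialPositions {w : Equiv.Perm (Fin (r + k))} {s : Fin r → Fin (r + k)}
    {p : Equiv.Perm (Fin r)} (hs : StrictMono s)
    (hw : ∀ i : Fin r, w (Fin.castAdd k i) = s (p i)) (e : Fin (r + k) →₀ ℕ) :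
    permAct w (sMono e (initialPositions r k)) (Finset.univ.image s) =
      ((Equiv.Perm.sign p : ℤ) : ℚ) • ∏ i, X (w i) ^ e i := by
  have image_symm : (Finset.univ.image s).image w.symm = initialPositions r k := by
    have symm_apply : w.symm ∘ s = Fin.castAddEmb k ∘ p.symm := funext fun i => by
      simp [Equiv.symm_apply_eq, hw]
    rw [Finset.image_image, symm_apply, ← Finset.image_image, Finset.image_univ_equiv,
      initialPositions, Finset.map_eq_image]
  have sign_eq : ((Equiv.Perm.sign p : ℤ) : ℚ) = (-1) ^ (Finset.univ.filter
      fun x : Fin r × Fin r => x.1 < x.2 ∧ p x.2 < p x.1).card := by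
    rw [← neg_one_pow_card_inversions]
    simp
  rw [permAct, image_symm, card_inversions_initialPositions hs hw, sMono, if_pos rfl,
    rename_monomial_one, sign_eq]

/-- The exponent of the monomial `x_1^{a_1} ⋯ x_r^{a_r} x_{r+1}^{k-1} ⋯ x_{r+k}^0`. -/
noncomputable def superVandermondeExponent (k : ℕ) (a : Fin r → ℕ) : Fin (r + k) →₀ ℕ :=
  Finsupp.equivFunOnFinite.symm (Fin.append a fun j : Fin k => k - 1 - j)

theorem superVandermonde_eq_sum (a : Fin r → ℕ) :
    superVandermonde (r + k) r a = ∑ w : Equiv.Perm (Fin (r + k)),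
      ((Equiv.Perm.sign w : ℤ) : ℚ) •
        permAct w (sMono (superVandermondeExponent k a) (initialPositions r k)) := by
  have exponent_eq : (fun i : Fin (r + k) =>
      if h : (i : ℕ) < r then a ⟨i, h⟩ else r + k - 1 - i) =
        Fin.append a fun j : Fin k => k - 1 - j := by
    ext i
    refine Fin.addCases (fun i => ?_) (fun i => ?_) i
    · simp
    · simp only [Fin.val_natAdd, not_lt.2 (Nat.le_add_right r i), dite_false, Fin.append_right]
      omega
  rw [superVandermonde, exponent_eq, filter_lt_eq_initialPositions, superVandermondeExponent]

theorem prod_X_pow_superVandermondeExponent (w₀ : Equiv.Perm (Fin (r + k))) (a : Fin r → ℕ)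
    (p : Equiv.Perm (Fin r)) (q : Equiv.Perm (Fin k)) :
    ∏ i, X (R := ℚ) ((w₀ * blockPerm p q) i) ^ superVandermondeExponent k a i =
      (∏ i, X (w₀ (Fin.castAdd k (p i))) ^ a i) *
        ∏ i : Fin k, X (w₀ (Fin.natAdd r (q i))) ^ (k - 1 - i : ℕ) := by
  simp [Fin.prod_univ_add, superVandermondeExponent, blockPerm_castAdd, blockPerm_natAdd]

theorem exists_mul_blockPerm_eq {w₀ w : Equiv.Perm (Fin (r + k))}
    (h : (Finset.univ.image fun i => w₀ (Fin.castAdd k i)) = (initialPositions r k).image w) :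
    ∃ pq : Equiv.Perm (Fin r) × Equiv.Perm (Fin k), w₀ * blockPerm pq.1 pq.2 = w := by
  obtain ⟨pq, hpq⟩ := exists_blockPerm_eq (w := w₀⁻¹ * w) fun i => by
    have : w (Fin.castAdd k i) ∈ (initialPositions r k).image w :=
      Finset.mem_image_of_mem _ (by simp [initialPositions])
    obtain ⟨j, -, hj⟩ := Finset.mem_image.1 (h ▸ this)
    exact ⟨j, by simp [← hj]⟩
  exact ⟨pq, by rw [hpq, mul_inv_cancel_left]⟩

theorem sign_smul_permAct_mul_blockPerm {w₀ : Equiv.Perm (Fin (r + k))}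
    (hw₀ : StrictMono fun i => w₀ (Fin.castAdd k i)) (a : Fin r → ℕ) (p : Equiv.Perm (Fin r))
    (q : Equiv.Perm (Fin k)) :
    ((Equiv.Perm.sign (w₀ * blockPerm p q) : ℤ) : ℚ) •
        permAct (w₀ * blockPerm p q) (sMono (superVandermondeExponent k a) (initialPositions r k))
          (Finset.univ.image fun i => w₀ (Fin.castAdd k i)) =
      ((Equiv.Perm.sign w₀ : ℤ) : ℚ) •
        ((∏ i, X (w₀ (Fin.castAdd k (p i))) ^ a i) *
          (Equiv.Perm.sign q • ∏ i : Fin k, X (w₀ (Fin.natAdd r (q i))) ^ (k - 1 - i : ℕ))) := by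
  have hw (i : Fin r) : (w₀ * blockPerm p q) (Fin.castAdd k i) = w₀ (Fin.castAdd k (p i)) := by
    rw [Equiv.Perm.mul_apply, blockPerm_castAdd]
  rw [permAct_sMono_initialPositions hw₀ hw, prod_X_pow_superVandermondeExponent,
    Units.smul_def (Equiv.Perm.sign q), ← Int.cast_smul_eq_zsmul ℚ, mul_smul_comm, smul_smul,
    smul_smul, map_mul, sign_blockPerm]
  obtain hp | hp := Int.units_eq_one_or (Equiv.Perm.sign p) <;> simp [hp]

theorem superVandermonde_apply {w₀ : Equiv.Perm (Fin (r + k))}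
    (hw₀ : StrictMono fun i => w₀ (Fin.castAdd k i)) (a : Fin r → ℕ) :
    superVandermonde (r + k) r a (Finset.univ.image fun i => w₀ (Fin.castAdd k i)) =
      ((Equiv.Perm.sign w₀ : ℤ) : ℚ) •
        ((Matrix.of fun i j => X (w₀ (Fin.castAdd k i)) ^ a j).permanent *
          (Matrix.of fun i j : Fin k => X (w₀ (Fin.natAdd r i)) ^ (k - 1 - j : ℕ)).det) := by
  rw [superVandermonde_eq_sum, Finset.sum_apply, ← Fintype.sum_of_injective
    (fun pq : Equiv.Perm _ × Equiv.Perm _ => w₀ * blockPerm pq.1 pq.2)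
    ((mul_right_injective w₀).comp blockPerm_injective) _ _ (fun w hw => ?_)
    fun pq => (sign_smul_permAct_mul_blockPerm hw₀ a pq.1 pq.2).symm]
  · rw [← Finset.smul_sum, Fintype.sum_prod_type, Matrix.permanent, Matrix.det_apply,
      Finset.sum_mul_sum]
    rfl
  · rw [Pi.smul_apply, permAct_sMono_eq_zero fun h => hw (exists_mul_blockPerm_eq h), smul_zero]

theorem superVandermonde_apply_eq_zero_of_card_ne (a : Fin r → ℕ) {S : Finset (Fin (r + k))}
    (hS : S.card ≠ r) : superVandermonde (r + k) r a S = 0 := by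
  rw [superVandermonde_eq_sum, Finset.sum_apply]
  refine Finset.sum_eq_zero fun w _ => ?_
  rw [Pi.smul_apply, permAct_sMono_eq_zero, smul_zero]
  rintro rfl
  exact hS (by simp [Finset.card_image_of_injective _ w.injective, initialPositions])

theorem det_X_pow_rev_eq_vandermondePoly {σ R : Type*} [CommRing R] (t : Fin k → σ) :
    (Matrix.of fun i j : Fin k => (X (t i) : MvPolynomial σ R) ^ (k - 1 - j : ℕ)).det =
      ((Equiv.Perm.sign (Fin.revPerm : Equiv.Perm (Fin k)) : ℤ) : MvPolynomial σ R) *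
        vandermondePoly t := by
  rw [vandermondePoly, ← Matrix.det_permute']
  congr 1
  ext1 i j
  simp [vandermondeMatrix, Nat.sub_sub, add_comm]

theorem superVandermonde_zero_apply {w₀ : Equiv.Perm (Fin (r + k))}
    (hw₀ : StrictMono fun i => w₀ (Fin.castAdd k i)) :
    ∃ c : ℚ, c ≠ 0 ∧
      superVandermonde (r + k) r (fun _ => 0)
          (Finset.univ.image fun i => w₀ (Fin.castAdd k i)) =
        c • vandermondePoly fun i => w₀ (Fin.natAdd r i) := by
  refine ⟨(Equiv.Perm.sign w₀ : ℤ) * (r.factorial *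
    (Equiv.Perm.sign (Fin.revPerm : Equiv.Perm (Fin k)) : ℤ)), by simp [Nat.factorial_ne_zero], ?_⟩
  rw [superVandermonde_apply hw₀, det_X_pow_rev_eq_vandermondePoly]
  simp [Matrix.permanent, Fintype.card_perm, smul_eq_C_mul, mul_assoc]

theorem pAct_superVandermonde_zero_apply_eq_zero_iff {w₀ : Equiv.Perm (Fin (r + k))}
    (hw₀ : StrictMono fun i => w₀ (Fin.castAdd k i)) {f : MvPolynomial (Fin (r + k)) ℚ} :
    pAct f (superVandermonde (r + k) r fun _ => 0)
        (Finset.univ.image fun i => w₀ (Fin.castAdd k i)) = 0 ↔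
      diffAction f (vandermondePoly fun i => w₀ (Fin.natAdd r i)) = 0 := by
  obtain ⟨c, hc, happly⟩ := superVandermonde_zero_apply hw₀
  rw [pAct, diffOp_eq_diffAction, happly, map_smul, smul_eq_zero_iff_right hc]

theorem exists_perm_strictMono_castAdd_and_natAdd_eq (t : Fin k ↪ Fin (r + k)) :
    ∃ w : Equiv.Perm (Fin (r + k)), (StrictMono fun i => w (Fin.castAdd k i)) ∧
      (Finset.univ.image fun i => w (Fin.castAdd k i)) = (Finset.univ.map t)ᶜ ∧
      (fun j => w (Fin.natAdd r j)) = t := by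
  have hcard : (Finset.univ.map t)ᶜ.card = r := by simp [Finset.card_compl]
  let s := (Finset.univ.map t)ᶜ.orderEmbOfFin hcard
  have hst (i : Fin r) (j : Fin k) : s i ≠ t j := fun h =>
    Finset.mem_compl.1 (Finset.orderEmbOfFin_mem _ hcard i)
      (h ▸ Finset.mem_map_of_mem t (Finset.mem_univ j))
  have hbij : (Fin.append s t).Bijective :=
    Finite.injective_iff_bijective.1 (Fin.append_injective_iff.2 ⟨s.injective, t.injective, hst⟩)
  refine ⟨Equiv.ofBijective _ hbij, ?_, ?_, ?_⟩
  · simpa using s.strictMono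
  · simpa only [Equiv.ofBijective_apply, Fin.append_left] using
      Finset.image_orderEmbOfFin_univ _ hcard
  · simp

theorem pAct_superVandermonde_zero_iff {f : MvPolynomial (Fin (r + k)) ℚ} :
    pAct f (superVandermonde (r + k) r fun _ => 0) = 0 ↔
      f ∈ vandermondeAnnihilator ℚ Finset.univ k := by
  rw [mem_vandermondeAnnihilator]
  refine ⟨fun hf t _ => ?_, fun hf => funext fun S => ?_⟩
  · obtain ⟨w, hw, -, hwt⟩ := exists_perm_strictMono_castAdd_and_natAdd_eq t
    rw [← hwt, ← pAct_superVandermonde_zero_apply_eq_zero_iff hw, hf, Pi.zero_apply]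
  · by_cases hS : S.card = r
    · have hcard : Sᶜ.card = k := by simp [Finset.card_compl, hS]
      let t := (Sᶜ.orderEmbOfFin hcard).toEmbedding
      obtain ⟨w, hw, hwS, hwt⟩ := exists_perm_strictMono_castAdd_and_natAdd_eq t
      have himage : (Finset.univ.map t)ᶜ = S := by simp [t]
      rw [Pi.zero_apply, ← himage, ← hwS, pAct_superVandermonde_zero_apply_eq_zero_iff hw, hwt]
      exact hf t fun _ => Finset.mem_univ _
    · rw [pAct, superVandermonde_apply_eq_zero_of_card_ne _ hS, diffOp_eq_diffAction, map_zero,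
        Pi.zero_apply]

end Superspace

theorem tanisakiHook_eq_hookIdeal (n k : ℕ) : tanisakiHook n k = hookIdeal ℚ Finset.univ k := by
  refine le_antisymm (Ideal.span_le.2 ?_) (hookIdeal_le (fun d hd => ?_)
    (fun T hT => Ideal.subset_span (.inr ⟨T, hT, rfl⟩)) (by simp))
  · rintro _ (⟨d, hd, rfl⟩ | ⟨T, hT, rfl⟩)
    exacts [esymm_mem_hookIdeal (Nat.one_le_iff_ne_zero.1 hd.1), prod_X_mem_hookIdeal hT]
  · obtain hdn | hdn := le_or_gt d n
    · exact Ideal.subset_span (.inl ⟨d, ⟨Nat.one_le_iff_ne_zero.2 hd, hdn⟩, rfl⟩)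
    · simp [esymm, Finset.powersetCard_eq_empty.2, hdn]

/-- Proposition 4.3: for positive `r < n`, `k = n - r`, and `a = (0, …, 0)`
of length `r`, the hook Tanisaki ideal `I_λ` for `λ = (r+1, 1, …, 1)` equals the annihilator
of `Δ_n(a)` in `ℚ[x_1, …, x_n]`. -/
theorem tanisakiHook_eq_annihilator (n r : ℕ) (hr : 0 < r) (hrn : r < n) :
    (tanisakiHook n (n - r) : Set (MvPolynomial (Fin n) ℚ)) =
      {f : MvPolynomial (Fin n) ℚ |
        pAct f (superVandermonde n r (fun _ => 0)) = 0} := by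
  obtain ⟨k, rfl⟩ : ∃ k, n = r + k := Nat.exists_eq_add_of_le hrn.le
  have hk : k ≠ 0 := by omega
  ext f
  rw [Nat.add_sub_cancel_left, tanisakiHook_eq_hookIdeal,
    ← vandermondeAnnihilator_eq_hookIdeal hk (by simp), SetLike.mem_coe, Set.mem_ofPred_eq,
    pAct_superVandermonde_zero_iff]
end
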